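/- Let Ω be an open set in ℝ^n, n ≥ 3, and let φ:(0,∞)→(0,∞) be a nondecreasing function satisfying the Calderón-type condition ∫_{t_*}^∞ (t/φ(t))^{1/(n−2)} dt < ∞ for some t_* ∈ (0,∞). Then every continuous open mapping f:Ω→ℝ^n of the Orlicz–Sobolev class W^{1,φ}_loc(Ω) has a total differential at almost every point of Ω (with respect to Lebesgue measure). -/

import Mathlib

open MeasureTheory Metric Set Filter
open scoped ENNReal NNReal Topology RealInnerProductSpace Classical

noncomputable section

abbrev Eucl (n : ℕ) : Type := EuclideanSpace ℝ (Fin n)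

/-- A `k`-dimensional surface in `ℝⁿ`: a continuous map defined on an open subset of the
one-point compactification of `ℝᵏ`. -/
structure Surface (n k : ℕ) where
  dom : Set (OnePoint (Eucl k))
  isOpen_dom : IsOpen dom
  toFun : OnePoint (Eucl k) → Eucl n
  continuousOn : ContinuousOn toFun dom

namespace Surface

variable {n k : ℕ}

/-- The multiplicity function `N(S,y)` of a surface. -/
def mult (S : Surface n k) (y : Eucl n) : ℝ≥0∞ :=
  ((S.dom ∩ S.toFun ⁻¹' {y}).encard : ℕ∞)

/-- The integral `∫_S ρ dA = ∫ ρ(y) N(S,y) dH^k(y)` of `ρ` over the surface `S`. -/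
def sint (S : Surface n k) (ρ : Eucl n → ℝ≥0∞) : ℝ≥0∞ :=
  ∫⁻ y, ρ y * S.mult y ∂(μH[(k : ℝ)] : Measure (Eucl n))

end Surface

/-- Admissible functions for a family of `k`-surfaces. -/
def surfAdm {n : ℕ} (k : ℕ) (Γ : Set (Surface n k)) : Set (Eucl n → ℝ≥0∞) :=
  {ρ | Measurable ρ ∧ ∀ S ∈ Γ, 1 ≤ S.sint fun y => ρ y ^ k}

/-- The `p`-modulus of a family of `k`-surfaces. -/
def surfModulus {n : ℕ} (p : ℝ) (k : ℕ) (Γ : Set (Surface n k)) : ℝ≥0∞ :=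
  ⨅ ρ ∈ surfAdm k Γ, ∫⁻ x, ρ x ^ p

/-- Extensively `p`-admissible functions: admissibility may fail on a subfamily of
`p`-modulus zero. -/
def extAdm {n : ℕ} (p : ℝ) (k : ℕ) (Γ : Set (Surface n k)) : Set (Eucl n → ℝ≥0∞) :=
  {ρ | Measurable ρ ∧ surfModulus p k {S ∈ Γ | ¬ 1 ≤ S.sint fun y => ρ y ^ k} = 0}

/-- The family of the (injectively parametrized, nonempty) surfaces `S(x₀,r) ∩ D`,
`r ∈ I`. -/
def sphereFam {n : ℕ} (D : Set (Eucl n)) (x₀ : Eucl n) (I : Set ℝ) :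
    Set (Surface n (n - 1)) :=
  {S | ∃ r ∈ I, S.dom.Nonempty ∧ Set.InjOn S.toFun S.dom ∧
      S.toFun '' S.dom = sphere x₀ r ∩ D}

/-- The image of a family of surfaces under a map `f`. -/
def imageFam {n k : ℕ} (f : Eucl n → Eucl n) (Γ : Set (Surface n k)) :
    Set (Surface n k) :=
  {S' | ∃ S ∈ Γ, S'.dom = S.dom ∧ Set.EqOn S'.toFun (f ∘ S.toFun) S.dom}

/-- The spherical ring `R(x₀,a,b)`. -/
def ringA {n : ℕ} (x₀ : Eucl n) (a b : ℝ) : Set (Eucl n) :=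
  {x | a < dist x x₀ ∧ dist x x₀ < b}

/-- `‖Q‖_α(r) = (∫_{D ∩ S(x₀,r)} Q^α dA)^{1/α}`. -/
def sphNorm {n : ℕ} (D : Set (Eucl n)) (x₀ : Eucl n) (Q : Eucl n → ℝ≥0∞)
    (α : ℝ) (r : ℝ) : ℝ≥0∞ :=
  (∫⁻ x in D ∩ sphere x₀ r, Q x ^ α ∂(μH[((n : ℝ) - 1)] : Measure (Eucl n))) ^ (1 / α)

/-- `f` is a lower `Q`-homeomorphism w.r.t. the `p`-modulus at `x₀`. -/
def IsLowerQHomeoAt {n : ℕ} (D : Set (Eucl n)) (f : Eucl n → Eucl n)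
    (Q : Eucl n → ℝ≥0∞) (p : ℝ) (x₀ : Eucl n) (d₀ : ℝ≥0∞) : Prop :=
  ∀ ε ε₀ : ℝ, 0 < ε → ε < ε₀ → ENNReal.ofReal ε₀ < d₀ →
    (⨅ ρ ∈ extAdm p (n - 1) (sphereFam D x₀ (Ioo ε ε₀)),
        ∫⁻ x in ringA x₀ ε ε₀, ρ x ^ p / Q x) ≤
      surfModulus p (n - 1) (imageFam f (sphereFam D x₀ (Ioo ε ε₀)))

/-- `f` is a homeomorphism of `D` onto `D'`. -/
structure IsHomeoOn {n : ℕ} (f : Eucl n → Eucl n) (D D' : Set (Eucl n)) : Prop where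
  continuousOn : ContinuousOn f D
  injOn : Set.InjOn f D
  image_eq : f '' D = D'
  isOpenMapOn : ∀ U : Set (Eucl n), U ⊆ D → IsOpen U → IsOpen (f '' U)

/-- `Df` is the weak (Sobolev) derivative of `f` on `D`, and `f ∈ W^{1,1}_loc(D)`. -/
def IsWeakDerivOn {n m : ℕ} (D : Set (Eucl n)) (f : Eucl n → Eucl m)
    (Df : Eucl n → Eucl n →L[ℝ] Eucl m) : Prop :=
  LocallyIntegrableOn f D volume ∧ LocallyIntegrableOn Df D volume ∧
  ∀ ψ : Eucl n → ℝ, ContDiff ℝ (⊤ : ℕ∞) ψ → HasCompactSupport ψ → tsupport ψ ⊆ D →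
    ∀ v : Eucl n, ∫ x, ψ x • Df x v = - ∫ x, fderiv ℝ ψ x v • f x

/-- The Frobenius norm `|∇f| = (Σ_{i,j} (∂f_i/∂x_j)²)^{1/2}` of a linear map. -/
def frobNorm {n m : ℕ} (A : Eucl n →L[ℝ] Eucl m) : ℝ :=
  Real.sqrt (∑ i : Fin m, ∑ j : Fin n, (A (EuclideanSpace.single j 1) i) ^ 2)

/-- The Orlicz–Sobolev class `W^{1,φ}_loc(D)` (with explicit weak derivative `Df`). -/
def MemOrliczSobolevOn {n m : ℕ} (φ : ℝ → ℝ) (D : Set (Eucl n))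
    (f : Eucl n → Eucl m) (Df : Eucl n → Eucl n →L[ℝ] Eucl m) : Prop :=
  IsWeakDerivOn D f Df ∧
  ∀ K : Set (Eucl n), K ⊆ D → IsCompact K →
    (∫⁻ x in K, ENNReal.ofReal (φ (frobNorm (Df x)))) < ⊤

/-- `φ` is nondecreasing and positive on `(0,∞)`. -/
def NondecPos (φ : ℝ → ℝ) : Prop :=
  (∀ s t : ℝ, 0 < s → s ≤ t → φ s ≤ φ t) ∧ ∀ t : ℝ, 0 < t → 0 < φ t

/-- The Calderón-type condition `∫_{t₀}^∞ (t/φ(t))^{1/(n-2)} dt < ∞`. -/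
def CalderonCond (n : ℕ) (φ : ℝ → ℝ) : Prop :=
  ∃ t₀ : ℝ, 0 < t₀ ∧
    IntegrableOn (fun t => (t / φ t) ^ (1 / ((n : ℝ) - 2))) (Ioi t₀) volume

/-- `f` (with a.e. derivative `Df`) has finite distortion on `D`. -/
def HasFiniteDistortionOn {n : ℕ} (D : Set (Eucl n))
    (Df : Eucl n → Eucl n →L[ℝ] Eucl n) : Prop :=
  ∃ K : Eucl n → ℝ, AEMeasurable K (volume.restrict D) ∧
    ∀ᵐ x ∂volume.restrict D, 1 ≤ K x ∧ ‖Df x‖ ^ n ≤ K x * (Df x).det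

/-- The distortion `K_p(x,f)` for a map with derivative `Df`. -/
def distortionKp {n : ℕ} (p : ℝ) (Df : Eucl n → Eucl n →L[ℝ] Eucl n)
    (x : Eucl n) : ℝ≥0∞ :=
  if (Df x).det ≠ 0 then ENNReal.ofReal (‖Df x‖ ^ p / (Df x).det)
  else if Df x = 0 then 1 else ⊤

/-- The multiplicity function of a curve `γ : [0,1] → ℝⁿ`. -/
def curveMult {n : ℕ} (γ : ℝ → Eucl n) (y : Eucl n) : ℝ≥0∞ :=
  (({t ∈ Icc (0:ℝ) 1 | γ t = y}).encard : ℕ∞)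

/-- The line integral `∫_γ ρ ds = ∫ ρ(y) N(γ,y) dH¹(y)`. -/
def curveInt {n : ℕ} (γ : ℝ → Eucl n) (ρ : Eucl n → ℝ≥0∞) : ℝ≥0∞ :=
  ∫⁻ y, ρ y * curveMult γ y ∂(μH[(1 : ℝ)] : Measure (Eucl n))

/-- The family of curves joining `A` and `B` in `G`. -/
def curveJoin {n : ℕ} (A B G : Set (Eucl n)) : Set (ℝ → Eucl n) :=
  {γ | ContinuousOn γ (Icc 0 1) ∧ γ 0 ∈ A ∧ γ 1 ∈ B ∧ Set.MapsTo γ (Icc 0 1) G}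

/-- The `q`-modulus of a family of curves. -/
def curveModulus {n : ℕ} (q : ℝ) (Γ : Set (ℝ → Eucl n)) : ℝ≥0∞ :=
  ⨅ ρ ∈ {ρ : Eucl n → ℝ≥0∞ | Measurable ρ ∧ ∀ γ ∈ Γ, 1 ≤ curveInt γ ρ},
    ∫⁻ x, ρ x ^ q

/-- The `q`-capacity of the condenser `(A,C)`, via the modulus of joining curves. -/
def condenserCap {n : ℕ} (q : ℝ) (A C : Set (Eucl n)) : ℝ≥0∞ :=
  curveModulus q (curveJoin (frontier A) (frontier C) (A \ C))

/-- `L(x₀,f) = limsup_{x→x₀} |f(x)-f(x₀)|/|x-x₀|`. -/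
def LAt {n : ℕ} (f : Eucl n → Eucl n) (x₀ : Eucl n) : ℝ≥0∞ :=
  limsup (fun x => edist (f x) (f x₀) / edist x x₀) (𝓝[≠] x₀)

/-- `k_p(x₀) = limsup_{ε→0} (⨍_{B(x₀,ε)} K_p(x,f)^{(n-1)/(p-n+1)} dm)^{(p-n+1)/(n-1)}`. -/
def kpAt {n : ℕ} (p : ℝ) (Df : Eucl n → Eucl n →L[ℝ] Eucl n) (x₀ : Eucl n) : ℝ≥0∞ :=
  limsup (fun ε : ℝ =>
      ((∫⁻ x in ball x₀ ε, distortionKp p Df x ^ (((n:ℝ)-1)/(p-(n:ℝ)+1))) /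
        volume (ball x₀ ε)) ^ ((p-(n:ℝ)+1)/((n:ℝ)-1)))
    (𝓝[>] (0:ℝ))

/-- `f` is absolutely continuous on `S` w.r.t. `d`-dimensional Hausdorff measure. -/
def ACOnSet {n m : ℕ} (f : Eucl n → Eucl m) (S : Set (Eucl n)) (d : ℝ) : Prop :=
  ∀ ε : ℝ, 0 < ε → ∃ δ : ℝ, 0 < δ ∧ ∀ A : Set (Eucl n), A ⊆ S →
    (μH[d] : Measure (Eucl n)) A < ENNReal.ofReal δ →
      (μH[d] : Measure (Eucl m)) (f '' A) < ENNReal.ofReal ε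

/-- `f` is locally absolutely continuous on `S` w.r.t. `H^d`. -/
def LocACOnSet {n m : ℕ} (f : Eucl n → Eucl m) (S : Set (Eucl n)) (d : ℝ) : Prop :=
  ∀ x ∈ S, ∃ V ∈ 𝓝 x, ACOnSet f (S ∩ V) d

/-- The Luzin (N)-property of `f` on `S` w.r.t. `d`-dimensional Hausdorff measure. -/
def LusinNOn {n m : ℕ} (f : Eucl n → Eucl m) (S : Set (Eucl n)) (d : ℝ) : Prop :=
  ∀ A : Set (Eucl n), A ⊆ S → (μH[d] : Measure (Eucl n)) A = 0 →
    (μH[d] : Measure (Eucl m)) (f '' A) = 0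

end

/-!
On a face of a cube, of dimension `k = n - 1`, the oscillation of a map with gradient of size `D`
is bounded by averages of `D` over segments. A homothety of ratio `s` has Jacobian `s⁻ᵏ`, so one
splits `D` at each scale `s` into a level and an excess, the excess consisting of the gradient
sizes `t` with `(t / φ t) ^ (1 / (n - 2)) < s`. Integrating `s⁻ᵏ` over these `s` gives at most
`φ t / t`, hence a total excess of at most `φ ∘ D`, while the Calderón condition makes the levels
integrable in `s`. By Fubini, a box of size comparable to `r` about `x` can be chosen so that on
each of its faces the mean of `φ ∘ |∇f|` is at most a constant times `r⁻ⁿ ∫ φ ∘ |∇f|`. Over the box,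
an open map attains its largest distance to a given point on the frontier, so the oscillation of
`f` on `B(x, r)` is at most a constant times `r` wherever `φ ∘ |∇f|` has finite density. By
Stepanov's theorem, `f` is differentiable at almost all such points.
-/

/-! ### Oscillation through averages over segments -/

section SegmentAverages

theorem enorm_sub_le_mul_lintegral_fderiv_lineMap {E F : Type*} [NormedAddCommGroup E]
    [NormedSpace ℝ E] [NormedAddCommGroup F] [NormedSpace ℝ F] [CompleteSpace F] {u : E → F}
    (hu : ContDiff ℝ 1 u) (x z : E) :
    ‖u z - u x‖ₑ ≤
      ‖z - x‖ₑ * ∫⁻ s in Ioo (0 : ℝ) 1, ‖fderiv ℝ u (AffineMap.lineMap x z s)‖ₑ := by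
  have hderiv (s : ℝ) : deriv (u ∘ AffineMap.lineMap x z) s =
      fderiv ℝ u (AffineMap.lineMap x z s) (z - x) :=
    ((hu.differentiable one_ne_zero _).hasFDerivAt.comp_hasDerivAt s
      AffineMap.hasDerivAt_lineMap).deriv
  have hline : ContDiff ℝ 1 (u ∘ AffineMap.lineMap (k := ℝ) x z) :=
    hu.comp (AffineMap.contDiff_lineMap x z)
  calc ‖u z - u x‖ₑ
      ≤ ∫⁻ s in Icc (0 : ℝ) 1, ‖deriv (u ∘ AffineMap.lineMap x z) s‖ₑ := by
        simpa using enorm_sub_le_lintegral_deriv_of_contDiffOn_Icc hline.contDiffOn zero_le_one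
    _ ≤ ∫⁻ s in Ioo (0 : ℝ) 1, ‖z - x‖ₑ * ‖fderiv ℝ u (AffineMap.lineMap x z s)‖ₑ := by
        rw [← restrict_Ioo_eq_restrict_Icc]
        exact lintegral_mono fun s ↦ by
          rw [hderiv, mul_comm]
          exact ContinuousLinearMap.le_opENorm _ _
    _ = ‖z - x‖ₑ * ∫⁻ s in Ioo (0 : ℝ) 1, ‖fderiv ℝ u (AffineMap.lineMap x z s)‖ₑ :=
        lintegral_const_mul' _ _ enorm_ne_top

variable {V : Type*} [NormedAddCommGroup V] [NormedSpace ℝ V] [FiniteDimensional ℝ V]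
  [MeasurableSpace V] [BorelSpace V] {μ : Measure V} [μ.IsAddHaarMeasure] {B : Set V}

theorem setLIntegral_comp_lineMap_le (hB : Convex ℝ B) (hBm : MeasurableSet B)
    {H : V → ℝ≥0∞} (hH : Measurable H) {x : V} (hx : x ∈ B) {s : ℝ} (hs : s ∈ Ioo (0 : ℝ) 1) :
    ∫⁻ z in B, H (AffineMap.lineMap x z s) ∂μ ≤
      ENNReal.ofReal (s ^ Module.finrank ℝ V)⁻¹ * ∫⁻ y in B, H y ∂μ := by
  have hline (z : V) : AffineMap.lineMap x z s = s • z + (x - s • x) := by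
    rw [AffineMap.lineMap_apply_module']
    module
  have hmap : μ.map (s • ·) = ENNReal.ofReal (s ^ Module.finrank ℝ V)⁻¹ • μ := by
    rw [Measure.map_addHaar_smul μ hs.1.ne', abs_of_nonneg (by have := hs.1; positivity)]
  have hHB : Measurable (B.indicator H) := hH.indicator hBm
  calc ∫⁻ z in B, H (AffineMap.lineMap x z s) ∂μ
      ≤ ∫⁻ z, B.indicator H (AffineMap.lineMap x z s) ∂μ := by
        rw [← lintegral_indicator hBm]
        refine lintegral_mono (indicator_le fun z hz ↦ ?_)
        rw [indicator_of_mem (hB.lineMap_mem hx hz (Ioo_subset_Icc_self hs))]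
    _ = ∫⁻ w, B.indicator H (w + (x - s • x)) ∂μ.map (s • ·) := by
        simp only [hline]
        exact (lintegral_map (hHB.comp (measurable_add_const _)) (measurable_const_smul s)).symm
    _ = ENNReal.ofReal (s ^ Module.finrank ℝ V)⁻¹ * ∫⁻ y in B, H y ∂μ := by
        rw [hmap, lintegral_smul_measure, lintegral_add_right_eq_self (B.indicator H),
          lintegral_indicator hBm, smul_eq_mul]

variable {D : V → ℝ≥0∞} {level : ℝ → ℝ≥0∞} {excess : ℝ → V → ℝ≥0∞} {Ψ : V → ℝ≥0∞}

theorem setLIntegral_lintegral_lineMap_le (hB : Convex ℝ B) (hBm : MeasurableSet B)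
    (hlevel : Measurable level) (hexcess : Measurable (Function.uncurry excess))
    (hD : ∀ s ∈ Ioo (0 : ℝ) 1, ∀ y ∈ B, D y ≤ level s + excess s y)
    (hΨ : ∀ y ∈ B, ∫⁻ s in Ioo (0 : ℝ) 1,
      ENNReal.ofReal (s ^ Module.finrank ℝ V)⁻¹ * excess s y ≤ Ψ y)
    {x : V} (hx : x ∈ B) :
    ∫⁻ z in B, (∫⁻ s in Ioo (0 : ℝ) 1, D (AffineMap.lineMap x z s)) ∂μ ≤
      μ B * (∫⁻ s in Ioo (0 : ℝ) 1, level s) + ∫⁻ y in B, Ψ y ∂μ := by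
  have hline : Measurable
      (Function.uncurry fun (z : V) (s : ℝ) ↦ excess s (AffineMap.lineMap x z s)) := by
    have hpair : Measurable fun p : V × ℝ ↦ (p.2, AffineMap.lineMap x p.1 p.2) := by
      simp only [AffineMap.lineMap_apply_module']
      fun_prop
    exact hexcess.comp hpair
  have hslice (s : ℝ) : Measurable (excess s) := hexcess.of_uncurry_left
  calc ∫⁻ z in B, (∫⁻ s in Ioo (0 : ℝ) 1, D (AffineMap.lineMap x z s)) ∂μ
      ≤ ∫⁻ z in B, ((∫⁻ s in Ioo (0 : ℝ) 1, level s) +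
          ∫⁻ s in Ioo (0 : ℝ) 1, excess s (AffineMap.lineMap x z s)) ∂μ := by
        refine setLIntegral_mono' hBm fun z hz ↦ ?_
        rw [← lintegral_add_left hlevel]
        exact setLIntegral_mono' measurableSet_Ioo fun s hs ↦
          hD s hs _ (hB.lineMap_mem hx hz (Ioo_subset_Icc_self hs))
    _ = μ B * (∫⁻ s in Ioo (0 : ℝ) 1, level s) +
          ∫⁻ s in Ioo (0 : ℝ) 1, (∫⁻ z in B, excess s (AffineMap.lineMap x z s) ∂μ) := by
        rw [lintegral_add_left measurable_const, setLIntegral_const, mul_comm,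
          lintegral_lintegral_swap hline.aemeasurable]
    _ ≤ μ B * (∫⁻ s in Ioo (0 : ℝ) 1, level s) + ∫⁻ s in Ioo (0 : ℝ) 1,
          (∫⁻ y in B, ENNReal.ofReal (s ^ Module.finrank ℝ V)⁻¹ * excess s y ∂μ) := by
        gcongr _ + ?_
        refine setLIntegral_mono' measurableSet_Ioo fun s hs ↦ ?_
        rw [lintegral_const_mul _ (hslice s)]
        exact setLIntegral_comp_lineMap_le hB hBm (hslice s) hx hs
    _ ≤ μ B * (∫⁻ s in Ioo (0 : ℝ) 1, level s) + ∫⁻ y in B, Ψ y ∂μ := by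
        gcongr _ + ?_
        rw [lintegral_lintegral_swap (by
          refine (Measurable.mul ?_ hexcess).aemeasurable
          fun_prop)]
        exact setLIntegral_mono' hBm hΨ

-- Both points are compared with a third one `z`, chosen so that the two segment integrals issuing
-- from it are at most average.
theorem edist_le_of_le_lintegral_lineMap {Y : Type*} [PseudoEMetricSpace Y] {u : V → Y}
    {d : ℝ≥0∞} (hB : Convex ℝ B) (hBm : MeasurableSet B) (hB₀ : μ B ≠ 0) (hB₁ : μ B ≠ ⊤)
    (hDm : Measurable D)
    (hu : ∀ x ∈ B, ∀ z ∈ B,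
      edist (u x) (u z) ≤ d * ∫⁻ s in Ioo (0 : ℝ) 1, D (AffineMap.lineMap x z s))
    (hlevel : Measurable level) (hexcess : Measurable (Function.uncurry excess))
    (hD : ∀ s ∈ Ioo (0 : ℝ) 1, ∀ y ∈ B, D y ≤ level s + excess s y)
    (hΨ : ∀ y ∈ B, ∫⁻ s in Ioo (0 : ℝ) 1,
      ENNReal.ofReal (s ^ Module.finrank ℝ V)⁻¹ * excess s y ≤ Ψ y)
    {x x' : V} (hx : x ∈ B) (hx' : x' ∈ B) :
    edist (u x) (u x') ≤
      2 * d * ((∫⁻ s in Ioo (0 : ℝ) 1, level s) + (μ B)⁻¹ * ∫⁻ y in B, Ψ y ∂μ) := by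
  let J (a z : V) : ℝ≥0∞ := ∫⁻ s in Ioo (0 : ℝ) 1, D (AffineMap.lineMap a z s)
  let R : ℝ≥0∞ := (∫⁻ s in Ioo (0 : ℝ) 1, level s) + (μ B)⁻¹ * ∫⁻ y in B, Ψ y ∂μ
  have hJm (a : V) : Measurable (J a) := by
    have hline : Measurable fun p : V × ℝ ↦ D (AffineMap.lineMap a p.1 p.2) := by
      simp only [AffineMap.lineMap_apply_module']
      fun_prop
    exact hline.lintegral_prod_right'
  have hJ {a : V} (ha : a ∈ B) : ⨍⁻ z in B, J a z ∂μ ≤ R := by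
    rw [setLAverage_eq', lintegral_smul_measure, smul_eq_mul]
    grw [setLIntegral_lintegral_lineMap_le hB hBm hlevel hexcess hD hΨ ha]
    rw [mul_add, ← mul_assoc, ENNReal.inv_mul_cancel hB₀ hB₁, one_mul]
  obtain ⟨z, hz, hzJ⟩ := exists_le_setLAverage hB₀ hB₁ ((hJm x).add (hJm x')).aemeasurable
  have hsum : ⨍⁻ z in B, (J x + J x') z ∂μ ≤ 2 * R := by
    rw [laverage_eq', Pi.add_def, lintegral_add_left (hJm x), two_mul, ← laverage_eq',
      ← laverage_eq']
    exact add_le_add (hJ hx) (hJ hx')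
  calc edist (u x) (u x') ≤ edist (u x) (u z) + edist (u x') (u z) := edist_triangle_right _ _ _
    _ ≤ d * J x z + d * J x' z := add_le_add (hu x hx z hz) (hu x' hx' z hz)
    _ = d * (J x + J x') z := (mul_add _ _ _).symm
    _ ≤ d * (2 * R) := by gcongr; exact hzJ.trans hsum
    _ = 2 * d * R := by ring

end SegmentAverages

/-! ### Splitting the gradient size under the Calderón condition -/

section Calderon

/-- An Orlicz function `φ` as a function on `[0, ∞)` with values in `[0, ∞]`. The value at `0`
is set to `0`, because `φ 0` is arbitrary in `NondecPos φ`. -/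
noncomputable def orliczGauge (φ : ℝ → ℝ) (a : ℝ≥0) : ℝ≥0∞ :=
  ENNReal.ofReal ((Ioi 0).indicator φ a)

/-- A scale-dependent decomposition `a ≤ level s + excess s a` of the gradient size `a` which is
adapted to averaging over segments in dimension `k`: the level is integrable over the scales
`0 < s < 1`, and the excess, weighted by the Jacobian `s⁻ᵏ` of a homothety of ratio `s`, is
controlled by the Orlicz function `Φ`. -/
structure CalderonSplitting (k : ℕ) (Φ : ℝ≥0 → ℝ≥0∞) where
  level : ℝ → ℝ≥0∞
  excess : ℝ → ℝ≥0 → ℝ≥0∞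
  measurable_level : Measurable level
  measurable_excess : Measurable (Function.uncurry excess)
  lintegral_level_ne_top : ∫⁻ s in Ioo (0 : ℝ) 1, level s ≠ ⊤
  le_level_add_excess : ∀ s ∈ Ioo (0 : ℝ) 1, ∀ a : ℝ≥0, (a : ℝ≥0∞) ≤ level s + excess s a
  lintegral_excess_le : ∀ a : ℝ≥0,
    ∫⁻ s in Ioo (0 : ℝ) 1, ENNReal.ofReal (s ^ k)⁻¹ * excess s a ≤ Φ a

theorem lintegral_Ioi_inv_pow_succ_le {p : ℕ} (hp : 1 ≤ p) {c : ℝ} (hc : 0 < c) :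
    ∫⁻ s in Ioi c, ENNReal.ofReal (s ^ (p + 1))⁻¹ ≤ ENNReal.ofReal (c ^ p)⁻¹ := by
  have hp₀ : (1 : ℝ) ≤ p := by exact_mod_cast hp
  have hexp : (-(p + 1 : ℕ) : ℝ) < -1 := by
    push_cast
    linarith
  have hrpow : EqOn (fun s : ℝ ↦ ENNReal.ofReal (s ^ (p + 1))⁻¹)
      (fun s ↦ ENNReal.ofReal (s ^ (-(p + 1 : ℕ) : ℝ))) (Ioi c) := fun s hs ↦ by
    simp only [Real.rpow_neg (hc.trans hs).le, Real.rpow_natCast]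
  rw [setLIntegral_congr_fun measurableSet_Ioi hrpow, ← ofReal_integral_eq_lintegral_ofReal
      (integrableOn_Ioi_rpow_of_lt hexp hc)
      (ae_restrict_of_forall_mem measurableSet_Ioi fun s hs ↦
        Real.rpow_nonneg (hc.trans hs).le _), integral_Ioi_rpow_of_lt hexp hc]
  refine ENNReal.ofReal_le_ofReal ?_
  have hneg : (-(p + 1 : ℕ) : ℝ) + 1 = -p := by
    push_cast
    ring
  rw [hneg, neg_div_neg_eq, Real.rpow_neg hc.le, Real.rpow_natCast]
  exact div_le_self (by positivity) hp₀

theorem NondecPos.monotone_indicator {φ : ℝ → ℝ} (hφ : NondecPos φ) :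
    Monotone ((Ioi 0).indicator φ) := by
  intro s t hst
  rcases le_or_gt s 0 with hs | hs
  · rw [indicator_of_notMem (notMem_Ioi.2 hs)]
    exact indicator_nonneg (fun t ht ↦ (hφ.2 t ht).le) t
  · rw [indicator_of_mem (mem_Ioi.2 hs), indicator_of_mem (mem_Ioi.2 (hs.trans_le hst))]
    exact hφ.1 s t hs hst

theorem NondecPos.monotone_orliczGauge {φ : ℝ → ℝ} (hφ : NondecPos φ) :
    Monotone (orliczGauge φ) :=
  fun _ _ hab ↦ ENNReal.ofReal_le_ofReal (hφ.monotone_indicator hab)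

/-- The integrand `(t / φ t) ^ (1 / p)` of the Calderón condition in dimension `p + 2`, set to `0`
for `t ≤ 0`. -/
noncomputable def calderonIntegrand (p : ℕ) (φ : ℝ → ℝ) (t : ℝ) : ℝ :=
  (t / (Ioi 0).indicator φ t) ^ (p : ℝ)⁻¹

theorem calderonIntegrand_of_pos (p : ℕ) (φ : ℝ → ℝ) {t : ℝ} (ht : 0 < t) :
    calderonIntegrand p φ t = (t / φ t) ^ (p : ℝ)⁻¹ := by
  rw [calderonIntegrand, indicator_of_mem (mem_Ioi.2 ht)]

namespace NondecPos

variable {φ : ℝ → ℝ} {p : ℕ}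

theorem measurable_calderonIntegrand (hφ : NondecPos φ) : Measurable (calderonIntegrand p φ) :=
  (measurable_id.div hφ.monotone_indicator.measurable).pow_const _

theorem calderonIntegrand_pos (hφ : NondecPos φ) {t : ℝ} (ht : 0 < t) :
    0 < calderonIntegrand p φ t := by
  rw [calderonIntegrand_of_pos p φ ht]
  exact Real.rpow_pos_of_pos (div_pos ht (hφ.2 t ht)) _

theorem calderonIntegrand_le_two_mul (hφ : NondecPos φ) (hp : 1 ≤ p) {a t : ℝ} (hat : a / 2 ≤ t)
    (hta : t ≤ a) (ht : 0 < t) : calderonIntegrand p φ a ≤ 2 * calderonIntegrand p φ t := by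
  have hφt := hφ.2 t ht
  have hexp : (p : ℝ)⁻¹ ≤ 1 := inv_le_one_of_one_le₀ (by exact_mod_cast hp)
  rw [calderonIntegrand_of_pos p φ (ht.trans_le hta), calderonIntegrand_of_pos p φ ht]
  calc (a / φ a) ^ (p : ℝ)⁻¹ ≤ (2 * (t / φ t)) ^ (p : ℝ)⁻¹ := by
        have hquot : a / φ a ≤ 2 * t / φ t := by
          gcongr
          · linarith
          · exact hφ.1 t a ht hta
        rw [← mul_div_assoc]
        exact Real.rpow_le_rpow (div_nonneg (ht.le.trans hta) (hφ.2 a (ht.trans_le hta)).le)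
          hquot (by positivity)
    _ = 2 ^ (p : ℝ)⁻¹ * (t / φ t) ^ (p : ℝ)⁻¹ := Real.mul_rpow zero_le_two (by positivity)
    _ ≤ 2 * (t / φ t) ^ (p : ℝ)⁻¹ := by
        gcongr
        exact Real.rpow_le_self_of_one_le one_le_two hexp

theorem lintegral_excess_le_orliczGauge (hφ : NondecPos φ) (hp : 1 ≤ p) (a : ℝ≥0) :
    ∫⁻ s in Ioo (0 : ℝ) 1, ENNReal.ofReal (s ^ (p + 1))⁻¹ *
      (if calderonIntegrand p φ a < s then (a : ℝ≥0∞) else 0) ≤ orliczGauge φ a := by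
  rcases eq_or_ne a 0 with rfl | ha₀
  · simp only [ENNReal.coe_zero, ite_self, mul_zero, lintegral_zero, zero_le]
  have ha : (0 : ℝ) < a := NNReal.coe_pos.2 (pos_iff_ne_zero.2 ha₀)
  set c := calderonIntegrand p φ a with hc
  have hc₀ : 0 < c := hφ.calderonIntegrand_pos ha
  have hcp : (c ^ p)⁻¹ = φ a / a := by
    rw [hc, calderonIntegrand_of_pos p φ ha,
      Real.rpow_inv_natCast_pow (div_pos ha (hφ.2 a ha)).le (by lia), inv_div]
  calc ∫⁻ s in Ioo (0 : ℝ) 1, ENNReal.ofReal (s ^ (p + 1))⁻¹ *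
        (if c < s then (a : ℝ≥0∞) else 0)
      ≤ ∫⁻ s in Ioi c, ENNReal.ofReal (s ^ (p + 1))⁻¹ * a := by
        rw [← lintegral_indicator measurableSet_Ioi]
        refine (setLIntegral_le_lintegral _ _).trans (lintegral_mono fun s ↦ ?_)
        simp only [indicator_apply, mem_Ioi, mul_ite, mul_zero, le_refl]
    _ = (∫⁻ s in Ioi c, ENNReal.ofReal (s ^ (p + 1))⁻¹) * a :=
        lintegral_mul_const' _ _ ENNReal.coe_ne_top
    _ ≤ ENNReal.ofReal (c ^ p)⁻¹ * a := by grw [lintegral_Ioi_inv_pow_succ_le hp hc₀]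
    _ = orliczGauge φ a := by
        rw [orliczGauge, indicator_of_mem (mem_Ioi.2 ha), hcp, ← ENNReal.ofReal_coe_nnreal,
          ← ENNReal.ofReal_mul (div_pos (hφ.2 a ha) ha).le, div_mul_cancel₀ _ ha.ne']

end NondecPos

/-- The measure of the set of `t > t₀` at which twice the Calderón integrand is at least `s`: as a
function of `s`, it is the part of the level of a `CalderonSplitting` coming from large
gradients. -/
noncomputable def calderonTail (p : ℕ) (φ : ℝ → ℝ) (t₀ s : ℝ) : ℝ≥0∞ :=
  volume.restrict (Ioi t₀) {t | s ≤ 2 * calderonIntegrand p φ t}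

theorem antitone_calderonTail (p : ℕ) (φ : ℝ → ℝ) (t₀ : ℝ) : Antitone (calderonTail p φ t₀) :=
  fun _ _ hss' ↦ measure_mono fun _ ht ↦ hss'.trans ht

namespace NondecPos

variable {φ : ℝ → ℝ} {p : ℕ} {t₀ : ℝ}

theorem lintegral_calderonTail_lt_top (hφ : NondecPos φ) (ht₀ : 0 < t₀)
    (hint : IntegrableOn (calderonIntegrand p φ) (Ioi t₀)) :
    ∫⁻ s in Ioi (0 : ℝ), calderonTail p φ t₀ s < ⊤ := by
  have hlayer := lintegral_eq_lintegral_meas_le (volume.restrict (Ioi t₀))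
    (f := fun t ↦ 2 * calderonIntegrand p φ t)
    (ae_restrict_of_forall_mem measurableSet_Ioi fun t ht ↦
      (mul_pos two_pos (hφ.calderonIntegrand_pos (ht₀.trans ht))).le)
    (hφ.measurable_calderonIntegrand.const_mul 2).aemeasurable
  exact hlayer.symm.trans_lt (hint.const_mul 2).lintegral_lt_top

theorem coe_le_ofReal_add_calderonTail (hφ : NondecPos φ) (hp : 1 ≤ p) (ht₀ : 0 < t₀) {s : ℝ}
    {a : ℝ≥0} (hs : s ≤ calderonIntegrand p φ a) :
    (a : ℝ≥0∞) ≤ ENNReal.ofReal (2 * t₀) + 2 * calderonTail p φ t₀ s := by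
  rcases le_or_gt (a : ℝ) (2 * t₀) with hat | hat
  · grw [← le_self_add]
    exact (ENNReal.le_ofReal_iff_toReal_le ENNReal.coe_ne_top (by positivity)).2 hat
  have hsub : Ioo (a / 2 : ℝ) a ⊆ {t | s ≤ 2 * calderonIntegrand p φ t} ∩ Ioi t₀ := fun t ht ↦ by
    have htt₀ : t₀ < t := by linarith [ht.1]
    exact ⟨hs.trans (hφ.calderonIntegrand_le_two_mul hp ht.1.le ht.2.le (ht₀.trans htt₀)), htt₀⟩
  calc (a : ℝ≥0∞) = 2 * volume (Ioo (a / 2 : ℝ) a) := by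
        rw [Real.volume_Ioo, sub_half, ENNReal.ofReal_div_of_pos two_pos,
          ENNReal.ofReal_coe_nnreal, ENNReal.ofReal_ofNat,
          ENNReal.mul_div_cancel two_ne_zero ENNReal.ofNat_ne_top]
    _ ≤ 2 * calderonTail p φ t₀ s := by
        gcongr
        exact (measure_mono hsub).trans (Measure.le_restrict_apply _ _)
    _ ≤ ENNReal.ofReal (2 * t₀) + 2 * calderonTail p φ t₀ s := le_add_self

end NondecPos

theorem CalderonCond.nonempty_calderonSplitting {φ : ℝ → ℝ} {p : ℕ} (hp : 1 ≤ p)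
    (hφ : NondecPos φ) (hcal : CalderonCond (p + 2) φ) :
    Nonempty (CalderonSplitting (p + 1) (orliczGauge φ)) := by
  obtain ⟨t₀, ht₀, hint⟩ := hcal
  have htail : Measurable (calderonTail p φ t₀) := (antitone_calderonTail p φ t₀).measurable
  have hψ : IntegrableOn (calderonIntegrand p φ) (Ioi t₀) := by
    refine hint.congr_fun (fun t ht ↦ ?_) measurableSet_Ioi
    simp only [calderonIntegrand_of_pos p φ (ht₀.trans ht), Nat.cast_add, Nat.cast_ofNat,
      add_sub_cancel_right, one_div]
  have htail_int : ∫⁻ s in Ioo (0 : ℝ) 1, calderonTail p φ t₀ s < ⊤ :=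
    (lintegral_mono_set Ioo_subset_Ioi_self).trans_lt (hφ.lintegral_calderonTail_lt_top ht₀ hψ)
  refine ⟨{
    level := fun s ↦ ENNReal.ofReal (2 * t₀) + 2 * calderonTail p φ t₀ s
    excess := fun s a ↦ if calderonIntegrand p φ a < s then a else 0
    measurable_level := (htail.const_mul 2).const_add _
    measurable_excess := Measurable.ite
      (measurableSet_lt (hφ.measurable_calderonIntegrand.comp measurable_snd.coe_nnreal_real)
        measurable_fst)
      measurable_snd.coe_nnreal_ennreal measurable_const
    lintegral_level_ne_top := ?_
    le_level_add_excess := fun s _ a ↦ ?_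
    lintegral_excess_le := hφ.lintegral_excess_le_orliczGauge hp }⟩
  · rw [lintegral_add_left measurable_const, lintegral_const_mul _ htail, setLIntegral_const]
    exact ENNReal.add_ne_top.2 ⟨ENNReal.mul_ne_top ENNReal.ofReal_ne_top measure_Ioo_lt_top.ne,
      ENNReal.mul_ne_top ENNReal.ofNat_ne_top htail_int.ne⟩
  · split_ifs with hexcess
    · exact le_add_self
    · rw [add_zero]
      exact hφ.coe_le_ofReal_add_calderonTail hp ht₀ (not_lt.1 hexcess)

end Calderon

/-! ### Convolution with a nonnegative kernel -/

section LConvolution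

variable {G : Type*} [AddGroup G] [MeasurableSpace G] [MeasurableAdd₂ G] [MeasurableNeg G]
  {μ : Measure G} {f η : G → ℝ≥0∞}

theorem setLIntegral_lconvolution_le [SFinite μ] [μ.IsAddLeftInvariant]
    (hf : Measurable f) (hη : Measurable η) {A B : Set G} (hA : MeasurableSet A)
    (hB : MeasurableSet B) (hηB : ∀ x ∈ A, ∀ t ∉ B, η (-t + x) = 0) :
    ∫⁻ x in A, (f ⋆ₗ[μ] η) x ∂μ ≤ (∫⁻ t in B, f t ∂μ) * ∫⁻ w, η w ∂μ := by
  calc ∫⁻ x in A, (f ⋆ₗ[μ] η) x ∂μ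
      ≤ ∫⁻ x in A, (∫⁻ t in B, f t * η (-t + x) ∂μ) ∂μ := by
        refine setLIntegral_mono' hA fun x hx ↦ ?_
        rw [lconvolution_def, ← lintegral_indicator hB]
        refine lintegral_mono fun t ↦ ?_
        by_cases ht : t ∈ B
        · rw [indicator_of_mem ht]
        · rw [hηB x hx t ht, mul_zero]
          exact zero_le
    _ = ∫⁻ t in B, (∫⁻ x in A, f t * η (-t + x) ∂μ) ∂μ :=
        lintegral_lintegral_swap (Measurable.aemeasurable (by fun_prop))
    _ ≤ ∫⁻ t in B, f t * ∫⁻ w, η w ∂μ ∂μ := by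
        refine lintegral_mono fun t ↦ ?_
        rw [lintegral_const_mul _ (by fun_prop), ← lintegral_add_left_eq_self η (-t)]
        gcongr
        exact Measure.restrict_le_self
    _ = (∫⁻ t in B, f t ∂μ) * ∫⁻ w, η w ∂μ := lintegral_mul_const _ hf

theorem lintegral_mul_lconvolution_le [SFinite μ] {S : Type*} [MeasurableSpace S]
    {ν : Measure S} [SFinite ν] {κ : S → ℝ≥0∞} (hκ : Measurable κ) {q : S → G → ℝ≥0∞}
    (hq : Measurable (Function.uncurry q)) (hη : Measurable η)
    (hqf : ∀ t, ∫⁻ s, κ s * q s t ∂ν ≤ f t) (x : G) :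
    ∫⁻ s, κ s * (q s ⋆ₗ[μ] η) x ∂ν ≤ (f ⋆ₗ[μ] η) x := by
  have hqs (s : S) : Measurable (q s) := hq.of_uncurry_left
  have hqt (t : G) : Measurable fun s ↦ q s t := hq.of_uncurry_right
  calc ∫⁻ s, κ s * (q s ⋆ₗ[μ] η) x ∂ν
      = ∫⁻ s, (∫⁻ t, κ s * q s t * η (-t + x) ∂μ) ∂ν := by
        refine lintegral_congr fun s ↦ ?_
        have hmeas : Measurable fun t ↦ q s t * η (-t + x) := by fun_prop
        simp only [lconvolution_def, mul_assoc, lintegral_const_mul _ hmeas]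
    _ = ∫⁻ t, (∫⁻ s, κ s * q s t * η (-t + x) ∂ν) ∂μ :=
        lintegral_lintegral_swap (Measurable.aemeasurable (by fun_prop))
    _ ≤ (f ⋆ₗ[μ] η) x := by
        refine lintegral_mono fun t ↦ ?_
        rw [lintegral_mul_const _ (by fun_prop)]
        gcongr
        exact hqf t

theorem lconvolution_le_of_le_const_add [μ.IsAddRightInvariant] [μ.IsNegInvariant]
    {c : ℝ≥0∞} {q : G → ℝ≥0∞} (hη : Measurable η) (hfq : ∀ t, f t ≤ c + q t) (x : G) :
    (f ⋆ₗ[μ] η) x ≤ c * ∫⁻ w, η w ∂μ + (q ⋆ₗ[μ] η) x := by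
  have hη_int : ∫⁻ t, η (-t + x) ∂μ = ∫⁻ w, η w ∂μ := by
    rw [lintegral_neg_eq_self fun t ↦ η (t + x), lintegral_add_right_eq_self]
  have hηx : Measurable fun t ↦ η (-t + x) := by fun_prop
  calc (f ⋆ₗ[μ] η) x ≤ ∫⁻ t, (c * η (-t + x) + q t * η (-t + x)) ∂μ := by
        simp only [← add_mul]
        exact lintegral_mono fun t ↦ by dsimp only; gcongr; exact hfq t
    _ = c * ∫⁻ w, η w ∂μ + (q ⋆ₗ[μ] η) x := by
        rw [lintegral_add_left (hηx.const_mul c), lintegral_const_mul c hηx, hη_int,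
          lconvolution_def]

end LConvolution

/-! ### Mollification of Sobolev maps -/

section Mollification

variable {n m : ℕ}

theorem fderiv_comp_const_sub {E F : Type*} [NormedAddCommGroup E] [NormedSpace ℝ E]
    [NormedAddCommGroup F] [NormedSpace ℝ F] {e : E → F} {a x : E}
    (he : DifferentiableAt ℝ e (a - x)) :
    fderiv ℝ (fun t ↦ e (a - t)) x = -fderiv ℝ e (a - x) := by
  have hcomp := (he.hasFDerivAt.comp x ((hasFDerivAt_id x).const_sub a)).fderiv
  rwa [ContinuousLinearMap.comp_neg, ContinuousLinearMap.comp_id] at hcomp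

theorem IsWeakDerivOn.fderiv_convolution_apply {Ω K : Set (Eucl n)} {f : Eucl n → Eucl m}
    {Df : Eucl n → Eucl n →L[ℝ] Eucl m} (hw : IsWeakDerivOn Ω f Df) (hK : IsCompact K)
    (hKΩ : K ⊆ Ω) {e : Eucl n → ℝ} (he : ContDiff ℝ (⊤ : ℕ∞) e) (hes : HasCompactSupport e)
    {y : Eucl n} (hy : (fun t ↦ y - t) ⁻¹' tsupport e ⊆ K) (v : Eucl n) :
    fderiv ℝ (convolution e (K.indicator f) (ContinuousLinearMap.lsmul ℝ ℝ) volume) y v =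
      ∫ t, e (y - t) • Df t v := by
  have he₁ : ContDiff ℝ 1 e := he.of_le (by exact_mod_cast le_top)
  have hf : LocallyIntegrable (K.indicator f) :=
    ((integrable_indicator_iff hK.measurableSet).2
      (hw.1.integrableOn_compact_subset hKΩ hK)).locallyIntegrable
  have hconv := (hes.fderiv (𝕜 := ℝ)).convolutionExists_left (μ := volume)
    ((ContinuousLinearMap.lsmul ℝ ℝ : ℝ →L[ℝ] Eucl m →L[ℝ] Eucl m).precompL (Eucl n))
    (he₁.continuous_fderiv one_ne_zero) hf y
  have htest : tsupport (fun t ↦ e (y - t)) = (fun t ↦ y - t) ⁻¹' tsupport e :=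
    tsupport_comp_eq_preimage e (Homeomorph.subLeft y)
  have hderiv (t : Eucl n) :
      fderiv ℝ e (y - t) v = -fderiv ℝ (fun t ↦ e (y - t)) t v := by
    rw [fderiv_comp_const_sub (he₁.differentiable one_ne_zero _), neg_apply, neg_neg]
  calc fderiv ℝ (convolution e (K.indicator f) (ContinuousLinearMap.lsmul ℝ ℝ) volume) y v
      = ∫ t, fderiv ℝ e (y - t) v • K.indicator f t := by
        rw [(hes.hasFDerivAt_convolution_left _ he₁ hf y).fderiv, convolution_eq_swap,
          ContinuousLinearMap.integral_apply hconv.integrable_swap]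
        rfl
    _ = -∫ t, fderiv ℝ (fun t ↦ e (y - t)) t v • f t := by
        rw [← integral_neg]
        refine integral_congr_ae (Eventually.of_forall fun t ↦ ?_)
        dsimp only
        rw [← neg_smul, ← hderiv]
        by_cases ht : t ∈ K
        · rw [indicator_of_mem ht]
        · have hnot : y - t ∉ tsupport (fderiv ℝ e) :=
            fun h ↦ ht (hy (tsupport_fderiv_subset ℝ h))
          rw [image_eq_zero_of_notMem_tsupport hnot, zero_apply, zero_smul, zero_smul]
    _ = ∫ t, e (y - t) • Df t v :=
        (hw.2.2 _ (he.comp (contDiff_const.sub contDiff_id))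
          (hes.comp_homeomorph (Homeomorph.subLeft y)) (htest.trans_subset (hy.trans hKΩ)) v).symm

/-- The regularization of `f` on the set `K` by convolution with the normalization of a bump
function `b` supported near `0`. -/
noncomputable def mollification (b : ContDiffBump (0 : Eucl n)) (K : Set (Eucl n))
    (f : Eucl n → Eucl m) : Eucl n → Eucl m :=
  convolution (b.normed volume) (K.indicator f) (ContinuousLinearMap.lsmul ℝ ℝ) volume

/-- The normalization of a bump function as a kernel for convolutions of functions with values in
`[0, ∞]`. -/
noncomputable def bumpKernel (b : ContDiffBump (0 : Eucl n)) (w : Eucl n) : ℝ≥0∞ :=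
  ENNReal.ofReal (b.normed volume w)

variable (b : ContDiffBump (0 : Eucl n))

theorem measurable_bumpKernel : Measurable (bumpKernel b) :=
  (b.contDiff_normed (n := 0)).continuous.measurable.ennreal_ofReal

theorem lintegral_bumpKernel : ∫⁻ w, bumpKernel b w = 1 := by
  simp only [bumpKernel]
  rw [← ofReal_integral_eq_lintegral_ofReal b.integrable_normed
    (Eventually.of_forall b.nonneg_normed), b.integral_normed, ENNReal.ofReal_one]

theorem bumpKernel_eq_zero {w : Eucl n} (hw : b.rOut ≤ ‖w‖) : bumpKernel b w = 0 := by
  have hsupp : w ∉ Function.support (b.normed volume) := by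
    rwa [b.support_normed_eq, mem_ball_zero_iff, not_lt]
  rw [bumpKernel, Function.notMem_support.1 hsupp, ENNReal.ofReal_zero]

variable {b} {Ω K : Set (Eucl n)} {f : Eucl n → Eucl m}

theorem contDiff_mollification (hf : IntegrableOn f K) (hK : MeasurableSet K) :
    ContDiff ℝ 1 (mollification b K f) :=
  b.hasCompactSupport_normed.contDiff_convolution_left _ b.contDiff_normed
    ((integrable_indicator_iff hK).2 hf).locallyIntegrable

theorem dist_mollification_le (hf : IntegrableOn f K) (hK : MeasurableSet K) {y : Eucl n}
    (hy : ball y b.rOut ⊆ K) {ε : ℝ} (hε : ∀ x ∈ ball y b.rOut, dist (f x) (f y) ≤ ε) :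
    dist (mollification b K f y) (f y) ≤ ε := by
  have hyK : y ∈ K := hy (mem_ball_self b.rOut_pos)
  rw [← indicator_of_mem hyK f] at hε ⊢
  refine b.dist_normed_convolution_le ((integrable_indicator_iff hK).2 hf).aestronglyMeasurable
    fun x hx ↦ ?_
  rw [indicator_of_mem (hy hx)]
  exact hε x hx

theorem IsWeakDerivOn.enorm_fderiv_mollification_le {Df : Eucl n → Eucl n →L[ℝ] Eucl m}
    (hw : IsWeakDerivOn Ω f Df) (hK : IsCompact K) (hKΩ : K ⊆ Ω) {y : Eucl n}
    (hy : closedBall y b.rOut ⊆ K) {g : Eucl n → ℝ≥0∞}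
    (hg : ∀ᵐ t ∂volume.restrict K, ‖Df t‖ₑ ≤ g t) :
    ‖fderiv ℝ (mollification b K f) y‖ₑ ≤ (g ⋆ₗ bumpKernel b) y := by
  have hsupp : (fun t ↦ y - t) ⁻¹' tsupport (b.normed volume) ⊆ K := by
    rw [b.tsupport_normed_eq]
    refine Subset.trans (fun t ht ↦ ?_) hy
    rwa [mem_closedBall', dist_eq_norm, ← mem_closedBall_zero_iff]
  refine ContinuousLinearMap.opENorm_le_bound _ fun v ↦ ?_
  calc ‖fderiv ℝ (mollification b K f) y v‖ₑ
      = ‖∫ t, b.normed volume (y - t) • Df t v‖ₑ := by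
        rw [mollification,
          hw.fderiv_convolution_apply hK hKΩ b.contDiff_normed b.hasCompactSupport_normed hsupp]
    _ ≤ ∫⁻ t, g t * bumpKernel b (-t + y) * ‖v‖ₑ := by
        refine (enorm_integral_le_lintegral_enorm _).trans (lintegral_mono_ae ?_)
        filter_upwards [(ae_restrict_iff' hK.measurableSet).1 hg] with t ht
        by_cases htK : t ∈ K
        · rw [enorm_smul, Real.enorm_of_nonneg (b.nonneg_normed _), mul_right_comm, mul_comm,
            neg_add_eq_sub]
          gcongr
          · exact ((Df t).le_opENorm v).trans (by gcongr; exact ht htK)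
          · rfl
        · have hzero : b.normed volume (y - t) = 0 :=
            image_eq_zero_of_notMem_tsupport fun h ↦ htK (hsupp h)
          rw [hzero, zero_smul, enorm_zero]
          exact zero_le
    _ = (g ⋆ₗ bumpKernel b) y * ‖v‖ₑ := lintegral_mul_const' _ _ enorm_ne_top

end Mollification

/-! ### Axis-parallel slices and coordinate boxes -/

section Slices

theorem dist_le_sqrt_mul_dist_ofLp {n : ℕ} (x y : Eucl n) :
    dist x y ≤ √n * dist x.ofLp y.ofLp := by
  simpa [Real.sqrt_eq_rpow] using
    (PiLp.antilipschitzWith_ofLp 2 (fun _ : Fin n ↦ ℝ)).le_mul_dist x y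

variable {k : ℕ} (i : Fin (k + 1))

/-- The parametrization by `ℝᵏ` of the hyperplane `{x | x i = τ}` of `ℝᵏ⁺¹`. The parameter space
carries the sup norm, so that its balls are cubes. -/
noncomputable def slice (τ : ℝ) (y : Fin k → ℝ) : Eucl (k + 1) :=
  WithLp.toLp 2 (i.insertNth τ y)

theorem slice_removeNth (x : Eucl (k + 1)) : slice i (x i) (i.removeNth x.ofLp) = x := by
  simp [slice]

theorem lineMap_slice (τ : ℝ) (y z : Fin k → ℝ) (s : ℝ) :
    AffineMap.lineMap (slice i τ y) (slice i τ z) s = slice i τ (AffineMap.lineMap y z s) := by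
  ext j
  refine i.succAboveCases ?_ (fun j ↦ ?_) j <;> simp [slice, AffineMap.lineMap_apply]

theorem slice_mem_closedBall {τ t : ℝ} {y : Fin k → ℝ} {x : Eucl (k + 1)} (hτ : dist τ (x i) ≤ t)
    (hy : dist y (i.removeNth x.ofLp) ≤ t) : slice i τ y ∈ closedBall x (√(k + 1 : ℕ) * t) := by
  have ht : 0 ≤ t := dist_nonneg.trans hτ
  refine (dist_le_sqrt_mul_dist_ofLp _ _).trans ?_
  gcongr
  refine (dist_pi_le_iff ht).2 fun j ↦ i.succAboveCases ?_ (fun j ↦ ?_) j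
  · simpa [slice] using hτ
  · simpa [slice, Fin.removeNth] using (dist_le_pi_dist y _ j).trans hy

theorem lipschitzWith_slice (τ : ℝ) : LipschitzWith (NNReal.sqrt (k + 1 : ℕ)) (slice i τ) :=
  .of_dist_le_mul fun _ z ↦ by
    simpa using slice_mem_closedBall i (x := slice i τ z) (by simp [slice]) (by simp [slice])

theorem measurePreserving_slice :
    MeasurePreserving fun p : ℝ × (Fin k → ℝ) ↦ slice i p.1 p.2 :=
  (PiLp.volume_preserving_toLp (Fin (k + 1))).comp
    (volume_preserving_piFinSuccAbove (fun _ : Fin (k + 1) ↦ ℝ) i).symm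

theorem exists_setLIntegral_slice_le {Ψ : Eucl (k + 1) → ℝ≥0∞} (hΨ : Measurable Ψ) {a b : ℝ}
    (hab : a < b) {B : Set (Fin k → ℝ)} {S : Set (Eucl (k + 1))}
    (hS : MeasurableSet S) (hBS : ∀ τ ∈ Ioo a b, ∀ y ∈ B, slice i τ y ∈ S) :
    ∃ τ ∈ Ioo a b, ∫⁻ y in B, Ψ (slice i τ y) ≤ (ENNReal.ofReal (b - a))⁻¹ * ∫⁻ x in S, Ψ x := by
  have hΨ' : Measurable fun p : ℝ × (Fin k → ℝ) ↦ Ψ (slice i p.1 p.2) :=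
    hΨ.comp (measurePreserving_slice i).measurable
  obtain ⟨τ, hτ, hle⟩ := exists_le_setLAverage (μ := volume) (s := Ioo a b)
    (f := fun τ ↦ ∫⁻ y in B, Ψ (slice i τ y)) (by simpa) (by simp)
    hΨ'.lintegral_prod_right'.aemeasurable
  refine ⟨τ, hτ, hle.trans ?_⟩
  rw [setLAverage_eq, Real.volume_Ioo, ENNReal.div_eq_inv_mul]
  gcongr
  calc ∫⁻ τ in Ioo a b, ∫⁻ y in B, Ψ (slice i τ y)
      = ∫⁻ p in Ioo a b ×ˢ B, Ψ (slice i p.1 p.2) := by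
        rw [Measure.volume_eq_prod, ← Measure.prod_restrict, lintegral_prod _ hΨ'.aemeasurable]
    _ ≤ ∫⁻ p in (fun p : ℝ × (Fin k → ℝ) ↦ slice i p.1 p.2) ⁻¹' S, Ψ (slice i p.1 p.2) :=
        lintegral_mono_set fun p hp ↦ hBS _ hp.1 _ hp.2
    _ = ∫⁻ x in S, Ψ x := (measurePreserving_slice i).setLIntegral_comp_preimage hS hΨ

end Slices

section CoordinateBoxes

/-- The closed box `∏ᵢ [aᵢ, bᵢ]` in Euclidean space. -/
def coordBox {n : ℕ} (a b : Fin n → ℝ) : Set (Eucl n) := WithLp.ofLp ⁻¹' Icc a b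

variable {n : ℕ} {a b : Fin n → ℝ}

theorem isCompact_coordBox : IsCompact (coordBox a b) :=
  (PiLp.homeomorph 2 (fun _ : Fin n ↦ ℝ)).isCompact_preimage.2 isCompact_Icc

theorem exists_eq_of_mem_frontier_coordBox {x : Eucl n} (hx : x ∈ frontier (coordBox a b)) :
    ∃ i, x i = a i ∨ x i = b i := by
  by_contra! hne
  have hbox : x ∈ coordBox a b := isCompact_coordBox.isClosed.frontier_subset hx
  have hint : x.ofLp ∈ univ.pi fun i ↦ Ioo (a i) (b i) := fun i _ ↦
    ⟨(hbox.1 i).lt_of_ne (hne i).1.symm, (hbox.2 i).lt_of_ne (hne i).2⟩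
  refine hx.2 (mem_interior.2 ⟨WithLp.ofLp ⁻¹' univ.pi fun i ↦ Ioo (a i) (b i), ?_, ?_, hint⟩)
  · exact fun y hy ↦ ⟨fun i ↦ (hy i trivial).1.le, fun i ↦ (hy i trivial).2.le⟩
  · exact (isOpen_set_pi finite_univ fun i _ ↦ isOpen_Ioo).preimage (PiLp.continuous_ofLp 2 _)

-- Lower faces all contain the corner `a`; the upper face `y i = b i` reaches it through the
-- corner where only the `i`-th coordinate is raised, which lies on another lower face.
theorem edist_le_two_mul_of_faces {ι : Type*} [Nontrivial ι] {α : ι → Type*} [∀ i, Preorder (α i)]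
    {X : Type*} [PseudoEMetricSpace X] {u : (∀ i, α i) → X} {a b : ∀ i, α i} {B : ℝ≥0∞}
    (hface : ∀ i, ∀ y ∈ Icc a b, ∀ z ∈ Icc a b, y i = z i → z i = a i ∨ z i = b i →
      edist (u y) (u z) ≤ B)
    {y : ∀ i, α i} (hy : y ∈ Icc a b) {i : ι} (hyi : y i = a i ∨ y i = b i) :
    edist (u y) (u a) ≤ 2 * B := by
  have hab : a ≤ b := hy.1.trans hy.2
  have ha : a ∈ Icc a b := left_mem_Icc.2 hab
  rcases hyi with hyi | hyi
  · have hya : edist (u y) (u a) ≤ B := hface i y hy a ha hyi (.inl rfl)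
    exact hya.trans (le_mul_of_one_le_left' one_le_two)
  · obtain ⟨j, hji⟩ := exists_ne i
    let q := Function.update a i (b i)
    have hq : q ∈ Icc a b :=
      ⟨le_update_self_iff.2 (hab i), update_le_iff.2 ⟨le_rfl, fun j _ ↦ hab j⟩⟩
    have hyq : edist (u y) (u q) ≤ B := hface i y hy q hq (by simp [q, hyi]) (by simp [q])
    have hqa : edist (u q) (u a) ≤ B := hface j q hq a ha (by simp [q, hji]) (.inl rfl)
    grw [two_mul, edist_triangle (u y) (u q) (u a), hyq, hqa]

end CoordinateBoxes

/-! ### The maximum principle and the local oscillation estimate -/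

section MaximumPrinciple

/-- The maximum principle for the distances to the points of the target: over a compact subset of
`Ω`, the values of `f` are no farther from a given point than they are on the frontier. -/
def MaximumPrincipleOn {X Y : Type*} [TopologicalSpace X] [PseudoEMetricSpace Y] (f : X → Y)
    (Ω : Set X) : Prop :=
  ∀ K ⊆ Ω, IsCompact K → ∀ (c : Y) (B : ℝ≥0∞), (∀ y ∈ frontier K, edist (f y) c ≤ B) →
    ∀ x ∈ K, edist (f x) c ≤ B

theorem maximumPrincipleOn_of_isOpen_image {X Y : Type*} [TopologicalSpace X]
    [NormedAddCommGroup Y] [NormedSpace ℝ Y] [Nontrivial Y] {f : X → Y} {Ω : Set X}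
    (hf : ContinuousOn f Ω) (hopen : ∀ U ⊆ Ω, IsOpen U → IsOpen (f '' U)) :
    MaximumPrincipleOn f Ω := by
  intro K hKΩ hK c B hB x hx
  obtain ⟨z, hz, hmax⟩ := hK.exists_isMaxOn ⟨x, hx⟩
    (f := fun y ↦ dist (f y) c)
    ((continuous_id.dist continuous_const).comp_continuousOn (hf.mono hKΩ))
  have hz_interior : z ∉ interior K := by
    intro hz_int
    have himage : f '' interior K ⊆ closedBall c (dist (f z) c) :=
      image_subset_iff.2 fun y hy ↦ hmax (interior_subset hy)
    have hfz := interior_maximal himage (hopen _ (interior_subset.trans hKΩ) isOpen_interior)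
      (mem_image_of_mem f hz_int)
    rw [interior_closedBall'] at hfz
    exact lt_irrefl _ (mem_ball.1 hfz)
  have hxz : edist (f x) c ≤ edist (f z) c := by
    rw [edist_dist, edist_dist]
    exact ENNReal.ofReal_le_ofReal (hmax hx)
  exact hxz.trans (hB z ⟨subset_closure hz, hz_interior⟩)

theorem MaximumPrincipleOn.edist_le_of_faces {n : ℕ} [Nontrivial (Fin n)] {Y : Type*}
    [PseudoEMetricSpace Y] {f : Eucl n → Y} {Ω : Set (Eucl n)} (hf : MaximumPrincipleOn f Ω)
    {a b : Fin n → ℝ} (hΩ : coordBox a b ⊆ Ω) {B : ℝ≥0∞}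
    (hface : ∀ i, ∀ y ∈ coordBox a b, ∀ z ∈ coordBox a b, y i = z i → z i = a i ∨ z i = b i →
      edist (f y) (f z) ≤ B)
    {x x' : Eucl n} (hx : x ∈ coordBox a b) (hx' : x' ∈ coordBox a b) :
    edist (f x) (f x') ≤ 4 * B := by
  have hfrontier : ∀ y ∈ frontier (coordBox a b), edist (f y) (f (WithLp.toLp 2 a)) ≤ 2 * B := by
    intro y hy
    obtain ⟨i, hi⟩ := exists_eq_of_mem_frontier_coordBox hy
    exact edist_le_two_mul_of_faces (u := fun v ↦ f (WithLp.toLp 2 v))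
      (fun i y hy z hz ↦ hface i (WithLp.toLp 2 y) hy (WithLp.toLp 2 z) hz)
      (isCompact_coordBox.isClosed.frontier_subset hy) hi
  have hcorner := hf _ hΩ isCompact_coordBox _ _ hfrontier
  calc edist (f x) (f x') ≤ 2 * B + 2 * B :=
        (edist_triangle_right _ _ _).trans (add_le_add (hcorner x hx) (hcorner x' hx'))
    _ = 4 * B := by ring

end MaximumPrinciple

section LocalEstimate

variable {k m : ℕ} {Φ : ℝ≥0 → ℝ≥0∞} {g : Eucl (k + 1) → ℝ≥0} {η : Eucl (k + 1) → ℝ≥0∞}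

-- At each scale `s`, the splitting of `g` survives the convolution with the probability density
-- `η`, so that the segment estimate applies on the `k`-dimensional slice.
theorem CalderonSplitting.edist_comp_slice_le (S : CalderonSplitting k Φ) {F : Type*}
    [NormedAddCommGroup F] [NormedSpace ℝ F] [CompleteSpace F] {h : Eucl (k + 1) → F}
    (hh : ContDiff ℝ 1 h) (hg : Measurable g) (hη : Measurable η) (hη₁ : ∫⁻ w, η w = 1)
    (i : Fin (k + 1)) (τ : ℝ) {B : Set (Fin k → ℝ)} (hB : Convex ℝ B) (hBm : MeasurableSet B)
    (hB₀ : volume B ≠ 0) (hB₁ : volume B ≠ ⊤)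
    (hgrad : ∀ y ∈ B,
      ‖fderiv ℝ h (slice i τ y)‖ₑ ≤ ((fun x ↦ (g x : ℝ≥0∞)) ⋆ₗ η) (slice i τ y))
    {y z : Fin k → ℝ} (hy : y ∈ B) (hz : z ∈ B) :
    edist (h (slice i τ y)) (h (slice i τ z)) ≤
      2 * (NNReal.sqrt (k + 1 : ℕ) * ediam B) * ((∫⁻ s in Ioo (0 : ℝ) 1, S.level s) +
        (volume B)⁻¹ * ∫⁻ y in B, ((fun x ↦ Φ (g x)) ⋆ₗ η) (slice i τ y)) := by
  have hslice : Measurable (slice i τ) := (lipschitzWith_slice i τ).continuous.measurable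
  have hexcess : Measurable (Function.uncurry fun (s : ℝ) x ↦ S.excess s (g x)) :=
    S.measurable_excess.comp (measurable_fst.prodMk (hg.comp measurable_snd))
  refine edist_le_of_le_lintegral_lineMap (u := fun y ↦ h (slice i τ y))
    (D := fun y ↦ ‖fderiv ℝ h (slice i τ y)‖ₑ)
    (excess := fun s y ↦ ((fun x ↦ S.excess s (g x)) ⋆ₗ η) (slice i τ y))
    hB hBm hB₀ hB₁ ?_ ?_ S.measurable_level ?_ ?_ ?_ hy hz
  · exact ((hh.continuous_fderiv one_ne_zero).measurable.comp hslice).enorm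
  · intro y hy z hz
    rw [edist_comm, edist_eq_enorm_sub]
    grw [enorm_sub_le_mul_lintegral_fderiv_lineMap hh, ← edist_eq_enorm_sub,
      (lipschitzWith_slice i τ).edist_le_mul, edist_le_ediam_of_mem hz hy]
    simp only [lineMap_slice, le_refl]
  · have hconv : Measurable fun p : (ℝ × Eucl (k + 1)) × Eucl (k + 1) ↦
        S.excess p.1.1 (g p.2) * η (-p.2 + p.1.2) :=
      (hexcess.comp (by fun_prop : Measurable fun p : (ℝ × Eucl (k + 1)) × Eucl (k + 1) ↦
        (p.1.1, p.2))).mul (by fun_prop)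
    exact hconv.lintegral_prod_right'.comp
      (measurable_fst.prodMk (hslice.comp measurable_snd))
  · intro s hs y hy
    have hsplit := lconvolution_le_of_le_const_add (μ := volume) hη
      (fun x ↦ S.le_level_add_excess s hs (g x)) (slice i τ y)
    rw [hη₁, mul_one] at hsplit
    exact (hgrad y hy).trans hsplit
  · intro y _
    rw [Module.finrank_fin_fun]
    exact lintegral_mul_lconvolution_le (by fun_prop) hexcess hη
      (fun x ↦ S.lintegral_excess_le (g x)) _

theorem CalderonSplitting.exists_forall_edist_comp_slice_le (S : CalderonSplitting k Φ) {F : Type*}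
    [NormedAddCommGroup F] [NormedSpace ℝ F] [CompleteSpace F] {h : Eucl (k + 1) → F}
    (hh : ContDiff ℝ 1 h) (hΦ : Measurable Φ) (hg : Measurable g) (hη : Measurable η)
    (hη₁ : ∫⁻ w, η w = 1) {x₀ : Eucl (k + 1)} {r : ℝ} (hr : 0 < r)
    (hgrad : ∀ x ∈ closedBall x₀ (√(k + 1 : ℕ) * (2 * r)),
      ‖fderiv ℝ h x‖ₑ ≤ ((fun x ↦ (g x : ℝ≥0∞)) ⋆ₗ η) x)
    {M : ℝ≥0∞} (hM : ∫⁻ x in closedBall x₀ (√(k + 1 : ℕ) * (2 * r)), ((fun x ↦ Φ (g x)) ⋆ₗ η) x ≤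
      M * ENNReal.ofReal r ^ (k + 1))
    (i : Fin (k + 1)) {α : ℝ} (hα : Ioo α (α + r) ⊆ closedBall (x₀ i) (2 * r)) :
    ∃ τ ∈ Ioo α (α + r), ∀ y ∈ closedBall (i.removeNth x₀.ofLp) (2 * r),
      ∀ z ∈ closedBall (i.removeNth x₀.ofLp) (2 * r), edist (h (slice i τ y)) (h (slice i τ z)) ≤
        8 * NNReal.sqrt (k + 1 : ℕ) * ((∫⁻ s in Ioo (0 : ℝ) 1, S.level s) + M) *
          ENNReal.ofReal r := by
  set B := closedBall (i.removeNth x₀.ofLp) (2 * r)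
  set ρ := ENNReal.ofReal r
  have hρ₀ : ρ ≠ 0 := ENNReal.ofReal_ne_zero_iff.2 hr
  have hΦη : Measurable ((fun x ↦ Φ (g x)) ⋆ₗ η) := by fun_prop
  obtain ⟨τ, hτ, hle⟩ := exists_setLIntegral_slice_le i hΦη (lt_add_of_pos_right α hr) (B := B)
    measurableSet_closedBall fun τ hτ y hy ↦ slice_mem_closedBall i (hα hτ) hy
  rw [add_sub_cancel_left] at hle
  have hvol : volume B = (4 * ρ) ^ k := by
    rw [Real.volume_pi_closedBall _ (by positivity), Fintype.card_fin,
      ENNReal.ofReal_pow (by positivity), ← mul_assoc, ENNReal.ofReal_mul (by norm_num)]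
    norm_num [ρ]
  have hmean : (volume B)⁻¹ * ∫⁻ y in B, ((fun x ↦ Φ (g x)) ⋆ₗ η) (slice i τ y) ≤ M :=
    calc _ ≤ (ρ ^ k)⁻¹ * (ρ⁻¹ * (M * ρ ^ (k + 1))) := by
          grw [hle, hM, hvol, ← le_mul_of_one_le_left' (by norm_num : (1 : ℝ≥0∞) ≤ 4)]
      _ = M * ((ρ ^ (k + 1))⁻¹ * ρ ^ (k + 1)) := by
          rw [pow_succ, ENNReal.mul_inv (by simp [ρ]) (by simp [ρ])]
          ring
      _ = M := by rw [ENNReal.inv_mul_cancel (by simp [hρ₀]) (by simp [ρ]), mul_one]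
  have hdiam : ediam B ≤ 4 * ρ := by
    simp only [B, ← closedEBall_ofReal (mul_nonneg zero_le_two hr.le)]
    grw [ediam_closedEBall_le, ENNReal.ofReal_mul zero_le_two, ← mul_assoc]
    norm_num [ρ]
  refine ⟨τ, hτ, fun y hy z hz ↦ ?_⟩
  have hosc := S.edist_comp_slice_le hh hg hη hη₁ i τ (convex_closedBall _ _)
    measurableSet_closedBall (B := B) (by simp [hvol, hρ₀]) measure_closedBall_lt_top.ne
    (fun y hy ↦ hgrad _ (slice_mem_closedBall i (hα hτ) hy)) hy hz
  grw [hosc, hmean, hdiam]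
  exact le_of_eq (by ring)

theorem CalderonSplitting.exists_coordBox (S : CalderonSplitting k Φ) {F : Type*}
    [NormedAddCommGroup F] [NormedSpace ℝ F] [CompleteSpace F] {h : Eucl (k + 1) → F}
    (hh : ContDiff ℝ 1 h) (hΦ : Measurable Φ) (hg : Measurable g) (hη : Measurable η)
    (hη₁ : ∫⁻ w, η w = 1) {x₀ : Eucl (k + 1)} {r : ℝ} (hr : 0 < r)
    (hgrad : ∀ x ∈ closedBall x₀ (√(k + 1 : ℕ) * (2 * r)),
      ‖fderiv ℝ h x‖ₑ ≤ ((fun x ↦ (g x : ℝ≥0∞)) ⋆ₗ η) x)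
    {M : ℝ≥0∞} (hM : ∫⁻ x in closedBall x₀ (√(k + 1 : ℕ) * (2 * r)), ((fun x ↦ Φ (g x)) ⋆ₗ η) x ≤
      M * ENNReal.ofReal r ^ (k + 1)) :
    ∃ a b : Fin (k + 1) → ℝ, closedBall x₀ r ⊆ coordBox a b ∧
      coordBox a b ⊆ closedBall x₀ (√(k + 1 : ℕ) * (2 * r)) ∧
      ∀ i, ∀ y ∈ coordBox a b, ∀ z ∈ coordBox a b, y i = z i → z i = a i ∨ z i = b i →
        edist (h y) (h z) ≤ 8 * NNReal.sqrt (k + 1 : ℕ) *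
          ((∫⁻ s in Ioo (0 : ℝ) 1, S.level s) + M) * ENNReal.ofReal r := by
  have hslice (i : Fin (k + 1)) {α : ℝ} (hα : Ioo α (α + r) ⊆ closedBall (x₀ i) (2 * r)) :=
    S.exists_forall_edist_comp_slice_le hh hΦ hg hη hη₁ hr hgrad hM i hα
  choose a ha_mem ha using fun i ↦ hslice i (α := x₀ i - 2 * r) (by
    rw [Real.closedBall_eq_Icc]
    exact Ioo_subset_Icc_self.trans (Icc_subset_Icc_right (by linarith)))
  choose b hb_mem hb using fun i ↦ hslice i (α := x₀ i + r) (by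
    rw [Real.closedBall_eq_Icc]
    exact Ioo_subset_Icc_self.trans (Icc_subset_Icc (by linarith) (by linarith)))
  have hcube {y : Eucl (k + 1)} (hy : y ∈ coordBox a b) (i : Fin (k + 1)) :
      dist (y i) (x₀ i) ≤ 2 * r := by
    rw [Real.dist_eq, abs_le]
    constructor <;> linarith [hy.1 i, hy.2 i, (ha_mem i).1, (hb_mem i).2]
  have hcube_removeNth {y : Eucl (k + 1)} (hy : y ∈ coordBox a b) (i : Fin (k + 1)) :
      i.removeNth y.ofLp ∈ closedBall (i.removeNth x₀.ofLp) (2 * r) :=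
    (dist_pi_le_iff (by positivity)).2 fun _ ↦ hcube hy _
  refine ⟨a, b, fun y hy ↦ ?_, fun y hy ↦ ?_, fun i y hy z hz hyz hzi ↦ ?_⟩
  · have hcoord (i : Fin (k + 1)) : |y i - x₀ i| ≤ r :=
      (PiLp.norm_apply_le (y - x₀) i).trans ((dist_eq_norm y x₀).symm.trans_le hy)
    exact ⟨fun i ↦ by linarith [(abs_le.1 (hcoord i)).1, (ha_mem i).2],
      fun i ↦ by linarith [(abs_le.1 (hcoord i)).2, (hb_mem i).1]⟩
  · exact (dist_le_sqrt_mul_dist_ofLp _ _).trans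
      (by gcongr; exact (dist_pi_le_iff (by positivity)).2 (hcube hy))
  · rw [← slice_removeNth i y, ← slice_removeNth i z, hyz]
    rcases hzi with hzi | hzi <;> rw [hzi]
    · exact ha i _ (hcube_removeNth hy i) _ (hcube_removeNth hz i)
    · exact hb i _ (hcube_removeNth hy i) _ (hcube_removeNth hz i)

theorem exists_dist_mollification_le {n : ℕ} {f : Eucl n → Eucl m} {x₀ : Eucl n} {R R' : ℝ}
    (hR : R < R') (hf : ContinuousOn f (closedBall x₀ R')) {ε : ℝ} (hε : 0 < ε) :
    ∃ b : ContDiffBump (0 : Eucl n), b.rOut ≤ R' - R ∧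
      ∀ y ∈ closedBall x₀ R, dist (mollification b (closedBall x₀ R') f y) (f y) ≤ ε := by
  obtain ⟨δ, hδ, hfδ⟩ := uniformContinuousOn_iff_le.1
    ((isCompact_closedBall x₀ R').uniformContinuousOn_of_continuous hf) ε hε
  have hmin : 0 < min δ (R' - R) := lt_min hδ (sub_pos.2 hR)
  let b : ContDiffBump (0 : Eucl n) := ⟨min δ (R' - R) / 2, min δ (R' - R), half_pos hmin,
    half_lt_self hmin⟩
  refine ⟨b, min_le_right _ _, fun y hy ↦ ?_⟩
  have hball : ball y b.rOut ⊆ closedBall x₀ R' :=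
    ball_subset_closedBall.trans (closedBall_subset_closedBall' (by
      have := min_le_right δ (R' - R)
      linarith [mem_closedBall.1 hy, show b.rOut = min δ (R' - R) from rfl]))
  exact dist_mollification_le (hf.integrableOn_compact (isCompact_closedBall _ _))
    measurableSet_closedBall hball fun x hx ↦
      hfδ x (hball hx) y (hball (mem_ball_self b.rOut_pos))
        ((mem_ball.1 hx).le.trans (min_le_left _ _))

theorem setLIntegral_lconvolution_bumpKernel_le {n : ℕ} {b : ContDiffBump (0 : Eucl n)}
    {q : Eucl n → ℝ≥0∞} (hq : Measurable q) {x₀ : Eucl n} {R R' : ℝ} (hb : b.rOut ≤ R' - R) :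
    ∫⁻ x in closedBall x₀ R, (q ⋆ₗ bumpKernel b) x ≤ ∫⁻ x in closedBall x₀ R', q x := by
  have hsupport : ∀ x ∈ closedBall x₀ R, ∀ t ∉ closedBall x₀ R', bumpKernel b (-t + x) = 0 := by
    intro x hx t ht
    refine bumpKernel_eq_zero b ?_
    rw [neg_add_eq_sub, ← dist_eq_norm]
    linarith [mem_closedBall.1 hx, not_le.1 (mt mem_closedBall.2 ht), dist_triangle_left t x₀ x]
  grw [setLIntegral_lconvolution_le hq (measurable_bumpKernel b)
    measurableSet_closedBall measurableSet_closedBall hsupport, lintegral_bumpKernel, mul_one]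

theorem MaximumPrincipleOn.edist_le_of_setLIntegral_le [Nontrivial (Fin (k + 1))]
    {f : Eucl (k + 1) → Eucl m} {Df : Eucl (k + 1) → Eucl (k + 1) →L[ℝ] Eucl m}
    {Ω : Set (Eucl (k + 1))} (hmax : MaximumPrincipleOn f Ω) (hf : ContinuousOn f Ω)
    (hw : IsWeakDerivOn Ω f Df) (S : CalderonSplitting k Φ) (hΦ : Measurable Φ) (hg : Measurable g)
    (hDf : ∀ᵐ x ∂volume.restrict Ω, ‖Df x‖ₑ ≤ g x) {x₀ : Eucl (k + 1)} {r : ℝ} (hr : 0 < r)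
    (hΩ : closedBall x₀ (√(k + 1 : ℕ) * (3 * r)) ⊆ Ω) {M : ℝ≥0∞}
    (hM : ∫⁻ x in closedBall x₀ (√(k + 1 : ℕ) * (3 * r)), Φ (g x) ≤
      M * ENNReal.ofReal r ^ (k + 1)) :
    ∀ x ∈ closedBall x₀ r, edist (f x) (f x₀) ≤
      4 * (8 * NNReal.sqrt (k + 1 : ℕ) * ((∫⁻ s in Ioo (0 : ℝ) 1, S.level s) + M) + 2) *
        ENNReal.ofReal r := by
  set R := √(k + 1 : ℕ) * (2 * r)
  set R' := √(k + 1 : ℕ) * (3 * r)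
  have hR : R < R' := by
    simp only [R, R']
    gcongr
    norm_num
  obtain ⟨b, hb, hclose⟩ := exists_dist_mollification_le hR (hf.mono hΩ) hr
  set h := mollification b (closedBall x₀ R') f
  have hh : ContDiff ℝ 1 h :=
    contDiff_mollification ((hf.mono hΩ).integrableOn_compact (isCompact_closedBall _ _))
      measurableSet_closedBall
  have hgrad : ∀ y ∈ closedBall x₀ R,
      ‖fderiv ℝ h y‖ₑ ≤ ((fun x ↦ (g x : ℝ≥0∞)) ⋆ₗ bumpKernel b) y := fun y hy ↦
    hw.enorm_fderiv_mollification_le (isCompact_closedBall _ _) hΩ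
      (closedBall_subset_closedBall' (by linarith [mem_closedBall.1 hy]))
      (ae_restrict_of_ae_restrict_of_subset hΩ hDf)
  have hMη : ∫⁻ x in closedBall x₀ R, ((fun x ↦ Φ (g x)) ⋆ₗ bumpKernel b) x ≤
      M * ENNReal.ofReal r ^ (k + 1) :=
    (setLIntegral_lconvolution_bumpKernel_le (hΦ.comp hg) hb).trans hM
  obtain ⟨a, c, hball, hbox, hface⟩ := S.exists_coordBox hh hΦ hg (measurable_bumpKernel b)
    (lintegral_bumpKernel b) hr hgrad hMη
  have hfh : ∀ y ∈ coordBox a c, edist (h y) (f y) ≤ ENNReal.ofReal r := fun y hy ↦ by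
    rw [edist_dist]
    exact ENNReal.ofReal_le_ofReal (hclose y (hbox hy))
  intro x hx
  rw [mul_assoc]
  refine hmax.edist_le_of_faces (hbox.trans (closedBall_subset_closedBall hR.le |>.trans hΩ))
    (fun i y hy z hz hyz hzi ↦ ?_) (hball hx) (hball (mem_closedBall_self hr.le))
  grw [edist_triangle4 (f y) (h y) (h z) (f z), edist_comm (f y), hfh y hy, hfh z hz,
    hface i y hy z hz hyz hzi]
  exact le_of_eq (by ring)

end LocalEstimate

/-! ### Stepanov's theorem -/

section Stepanov

theorem exists_lipschitzWith_minorant {X : Type*} [PseudoMetricSpace X] {f : X → ℝ} {U : Set X}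
    {K : ℝ≥0} {x₀ : X} (hx₀ : x₀ ∈ U) (hf : ∀ z ∈ U, f x₀ ≤ f z + K * dist x₀ z) :
    ∃ v : X → ℝ, LipschitzWith K v ∧ (∀ z ∈ U, v z ≤ f z) ∧
      ∀ x ∈ U, (∀ z ∈ U, f x ≤ f z + K * dist x z) → v x = f x := by
  have : Nonempty U := ⟨⟨x₀, hx₀⟩⟩
  have hbdd (x : X) : BddBelow (range fun z : U ↦ f z + K * dist x z) := by
    refine ⟨f x₀ - K * dist x x₀, ?_⟩
    rintro _ ⟨z, rfl⟩
    have hz := hf z z.2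
    have htri : (K : ℝ) * dist x₀ z ≤ K * (dist x x₀ + dist x z) := by
      gcongr
      exact dist_triangle_left x₀ z x
    dsimp only
    linarith
  have hle : ∀ x ∈ U, (⨅ z : U, f z + K * dist x z) ≤ f x := fun x hx ↦
    (ciInf_le (hbdd x) ⟨x, hx⟩).trans_eq (by simp)
  refine ⟨fun x ↦ ⨅ z : U, f z + K * dist x z, .of_le_add_mul _ fun x y ↦ ?_, hle,
    fun x hx h ↦ (hle x hx).antisymm (le_ciInf fun z ↦ h z z.2)⟩
  rw [← sub_le_iff_le_add]
  refine le_ciInf fun z ↦ ?_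
  have hz := ciInf_le (hbdd x) z
  have htri : (K : ℝ) * dist x z ≤ K * (dist x y + dist y z) := by
    gcongr
    exact dist_triangle x y z
  linarith

variable {E : Type*} [NormedAddCommGroup E] [NormedSpace ℝ E]

theorem differentiableAt_of_eventually_le_of_le {u v f : E → ℝ} {x : E}
    (hv : DifferentiableAt ℝ v x) (hu : DifferentiableAt ℝ u x) (hvx : v x = f x) (hux : u x = f x)
    (hvf : ∀ᶠ y in 𝓝 x, v y ≤ f y) (hfu : ∀ᶠ y in 𝓝 x, f y ≤ u y) : DifferentiableAt ℝ f x := by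
  have hmin : IsLocalMin (fun y ↦ u y - v y) x := by
    filter_upwards [hvf, hfu] with y hvf hfu
    rw [hux, hvx]
    linarith
  have hderiv : fderiv ℝ v x = fderiv ℝ u x := by
    have hzero := hmin.fderiv_eq_zero
    rw [fderiv_fun_sub hu hv] at hzero
    exact (sub_eq_zero.1 hzero).symm
  have hu' := hasFDerivAt_iff_isLittleO.1 hu.hasFDerivAt
  have hv' := hasFDerivAt_iff_isLittleO.1 hv.hasFDerivAt
  rw [hderiv, hvx] at hv'
  rw [hux] at hu'
  refine (hasFDerivAt_iff_isLittleO (f' := fderiv ℝ u x)).2 ?_ |>.differentiableAt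
  refine .of_bound fun c hc ↦ ?_
  filter_upwards [hu'.bound hc, hv'.bound hc, hvf, hfu] with y hu' hv' hvf hfu
  rw [Real.norm_eq_abs, abs_le] at hu' hv' ⊢
  constructor <;> linarith

variable [FiniteDimensional ℝ E] [MeasurableSpace E] [BorelSpace E] {μ : Measure E}
  [μ.IsAddHaarMeasure]

-- On the set of points where the Lipschitz bound holds, `f` is touched from below and from above by
-- Lipschitz functions, to which Rademacher's theorem applies.
theorem ae_differentiableAt_of_forall_abs_sub_le (f : E → ℝ) {U : Set E} (hU : IsOpen U)
    (K : ℝ≥0) :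
    ∀ᵐ x ∂μ, x ∈ U → (∀ z ∈ U, |f z - f x| ≤ K * dist x z) → DifferentiableAt ℝ f x := by
  by_cases hne : ∃ x ∈ U, ∀ z ∈ U, |f z - f x| ≤ K * dist x z
  swap
  · exact .of_forall fun x hx hbound ↦ absurd ⟨x, hx, hbound⟩ hne
  obtain ⟨x₀, hx₀, hf⟩ := hne
  obtain ⟨v, hv_lip, hvf, hv_eq⟩ := exists_lipschitzWith_minorant (f := f) hx₀
    fun z hz ↦ by linarith [(abs_le.1 (hf z hz)).1]
  obtain ⟨w, hw_lip, hwf, hw_eq⟩ := exists_lipschitzWith_minorant (f := fun z ↦ -f z) hx₀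
    fun z hz ↦ by linarith [(abs_le.1 (hf z hz)).2]
  filter_upwards [hv_lip.ae_differentiableAt (μ := μ), hw_lip.ae_differentiableAt (μ := μ)]
    with x hv hw hx hbound
  refine differentiableAt_of_eventually_le_of_le hv hw.neg
    (hv_eq x hx fun z hz ↦ by linarith [(abs_le.1 (hbound z hz)).1]) ?_ ?_ ?_
  · rw [Pi.neg_apply, hw_eq x hx fun z hz ↦ by linarith [(abs_le.1 (hbound z hz)).2], neg_neg]
  · filter_upwards [hU.mem_nhds hx] using hvf
  · filter_upwards [hU.mem_nhds hx] with y hy using le_neg_of_le_neg (hwf y hy)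

theorem ae_differentiableAt_real_of_isBigO (f : E → ℝ) :
    ∀ᵐ x ∂μ, (f · - f x) =O[𝓝 x] (· - x) → DifferentiableAt ℝ f x := by
  have hbasis := (ae_ball_iff (TopologicalSpace.countable_countableBasis E)).2 fun U hU ↦
    ae_all_iff.2 fun N : ℕ ↦ ae_differentiableAt_of_forall_abs_sub_le (μ := μ) f
      (TopologicalSpace.isOpen_of_mem_countableBasis hU) N
  filter_upwards [hbasis] with x hx hO
  obtain ⟨c, hc⟩ := hO.bound
  obtain ⟨U, hU, hxU, hUc⟩ :=
    (TopologicalSpace.isBasis_countableBasis E).mem_nhds_iff.1 hc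
  obtain ⟨N, hN⟩ := exists_nat_ge c
  refine hx U hU N hxU fun z hz ↦ (hUc hz).trans ?_
  rw [dist_comm, dist_eq_norm]
  gcongr
  exact_mod_cast hN

theorem ae_differentiableAt_of_isBigO {F : Type*} [NormedAddCommGroup F] [NormedSpace ℝ F]
    [FiniteDimensional ℝ F] (f : E → F) :
    ∀ᵐ x ∂μ, (f · - f x) =O[𝓝 x] (· - x) → DifferentiableAt ℝ f x := by
  let e := (Module.finBasis ℝ F).equivFunL
  have hcoord := ae_all_iff.2 fun i ↦ ae_differentiableAt_real_of_isBigO (μ := μ) fun y ↦ e (f y) i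
  filter_upwards [hcoord] with x hx hO
  rw [← e.comp_differentiableAt_iff, differentiableAt_pi]
  refine fun i ↦ hx i ?_
  let coord : F →L[ℝ] ℝ := (ContinuousLinearMap.proj i).comp e.toContinuousLinearMap
  have hcoord := (coord.isBigO_comp (fun y ↦ f y - f x) (𝓝 x)).trans hO
  simp only [map_sub] at hcoord
  exact hcoord

theorem isBigO_sub_of_eventually_edist_le {X Y : Type*} [NormedAddCommGroup X]
    [SeminormedAddCommGroup Y] {f : X → Y} {x : X} {A : ℝ≥0∞} (hA : A ≠ ⊤)
    (h : ∀ᶠ r : ℝ in 𝓝[>] 0, ∀ y ∈ closedBall x r, edist (f y) (f x) ≤ A * ENNReal.ofReal r) :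
    (f · - f x) =O[𝓝 x] (· - x) := by
  obtain ⟨δ, hδ, hδ_sub⟩ := mem_nhdsGT_iff_exists_Ioo_subset.1 h
  refine .of_bound A.toReal ?_
  filter_upwards [ball_mem_nhds x hδ] with y hy
  rcases eq_or_ne y x with rfl | hyx
  · simp
  have hle := hδ_sub ⟨dist_pos.2 hyx, hy⟩ y (mem_closedBall.2 le_rfl)
  have hreal := ENNReal.toReal_mono (by finiteness) hle
  rwa [edist_dist, ENNReal.toReal_ofReal dist_nonneg, ENNReal.toReal_mul,
    ENNReal.toReal_ofReal dist_nonneg, dist_eq_norm, dist_eq_norm] at hreal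

end Stepanov

/-! ### Density of locally integrable functions -/

section Density

variable {X : Type*} [MetricSpace X] [ProperSpace X] [HasBesicovitchCovering X] [MeasurableSpace X]
  [BorelSpace X] {μ : Measure X} [IsFiniteMeasureOnCompacts μ] [μ.IsOpenPosMeasure] {Φ : X → ℝ≥0∞}

theorem ae_exists_eventually_setLIntegral_closedBall_le (hΦ : AEMeasurable Φ μ)
    (hfin : ∫⁻ x, Φ x ∂μ ≠ ⊤) :
    ∀ᵐ x ∂μ, ∃ M ≠ ⊤, ∀ᶠ r in 𝓝[>] (0 : ℝ),
      ∫⁻ y in closedBall x r, Φ y ∂μ ≤ M * μ (closedBall x r) := by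
  filter_upwards [(Besicovitch.vitaliFamily μ).ae_tendsto_lintegral_div hΦ hfin,
    ae_lt_top' hΦ hfin] with x hlim hx
  refine ⟨Φ x + 1, by finiteness, ?_⟩
  have hlt := (hlim.comp (Besicovitch.tendsto_filterAt μ x)).eventually
    (gt_mem_nhds (ENNReal.lt_add_right hx.ne one_ne_zero))
  filter_upwards [hlt, self_mem_nhdsWithin] with r hr hr_pos
  exact (ENNReal.div_le_iff (measure_closedBall_pos μ x hr_pos).ne'
    measure_closedBall_lt_top.ne).1 hr.le

theorem ae_restrict_exists_eventually_setLIntegral_closedBall_le {Ω : Set X} (hΩ : IsOpen Ω)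
    (hΦ : AEMeasurable Φ (μ.restrict Ω))
    (hfin : ∀ K ⊆ Ω, IsCompact K → ∫⁻ x in K, Φ x ∂μ < ⊤) :
    ∀ᵐ x ∂μ.restrict Ω, ∃ M ≠ ⊤, ∀ᶠ r in 𝓝[>] (0 : ℝ),
      ∫⁻ y in closedBall x r, Φ y ∂μ ≤ M * μ (closedBall x r) := by
  rw [ae_restrict_iff' hΩ.measurableSet, ae_iff]
  refine measure_null_of_locally_null _ fun x hx ↦ ?_
  have hxΩ : x ∈ Ω := (Classical.not_imp.1 hx).1
  obtain ⟨δ, hδ, hδΩ⟩ := nhds_basis_closedBall.mem_iff.1 (hΩ.mem_nhds hxΩ)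
  let K := closedBall x δ
  have hK_fin : ∫⁻ y, K.indicator Φ y ∂μ ≠ ⊤ := by
    rw [lintegral_indicator measurableSet_closedBall]
    exact (hfin K hδΩ (isCompact_closedBall x δ)).ne
  have hK_meas : AEMeasurable (K.indicator Φ) μ :=
    (aemeasurable_indicator_iff measurableSet_closedBall).2 (hΦ.mono_set hδΩ)
  have hball : ∀ᵐ y ∂μ, y ∈ ball x δ → ∃ M ≠ ⊤, ∀ᶠ r in 𝓝[>] (0 : ℝ),
      ∫⁻ z in closedBall y r, Φ z ∂μ ≤ M * μ (closedBall y r) := by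
    filter_upwards [ae_exists_eventually_setLIntegral_closedBall_le hK_meas hK_fin]
      with y ⟨M, hM, hle⟩ hy
    refine ⟨M, hM, ?_⟩
    obtain ⟨ε, hε, hεK⟩ := nhds_basis_closedBall.mem_iff.1 (isOpen_ball.mem_nhds hy)
    filter_upwards [hle, Ioo_mem_nhdsGT hε] with r hle hr
    rwa [← setLIntegral_congr_fun measurableSet_closedBall fun z hz ↦
      indicator_of_mem (ball_subset_closedBall <|
        hεK <| closedBall_subset_closedBall hr.2.le hz) Φ]
  refine ⟨_, inter_mem_nhdsWithin _ (ball_mem_nhds x hδ), ?_⟩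
  refine measure_mono_null ?_ (ae_iff.1 hball)
  exact fun y hy ↦ fun himp ↦ hy.1 fun _ ↦ himp hy.2

theorem ae_restrict_exists_eventually_setLIntegral_closedBall_mul_le {E : Type*}
    [NormedAddCommGroup E] [NormedSpace ℝ E] [FiniteDimensional ℝ E] [MeasurableSpace E]
    [BorelSpace E] {μ : Measure E} [μ.IsAddHaarMeasure] {Φ : E → ℝ≥0∞} {Ω : Set E} (hΩ : IsOpen Ω)
    (hΦ : AEMeasurable Φ (μ.restrict Ω))
    (hfin : ∀ K ⊆ Ω, IsCompact K → ∫⁻ x in K, Φ x ∂μ < ⊤) {c : ℝ} (hc : 0 < c) :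
    ∀ᵐ x ∂μ.restrict Ω, ∃ M ≠ ⊤, ∀ᶠ r in 𝓝[>] (0 : ℝ),
      ∫⁻ y in closedBall x (c * r), Φ y ∂μ ≤ M * ENNReal.ofReal r ^ Module.finrank ℝ E := by
  filter_upwards [ae_restrict_exists_eventually_setLIntegral_closedBall_le hΩ hΦ hfin]
    with x ⟨M, hM, hle⟩
  refine ⟨M * (ENNReal.ofReal c ^ Module.finrank ℝ E * μ (ball 0 1)),
    by finiteness [measure_ball_lt_top (μ := μ) (x := (0 : E)) (r := 1)], ?_⟩
  filter_upwards [eventually_nhdsGT_zero_mul_left hc hle, self_mem_nhdsWithin] with r hle hr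
  rw [mem_Ioi] at hr
  rw [Measure.addHaar_closedBall μ x (by positivity), mul_pow, ENNReal.ofReal_mul (by positivity),
    ENNReal.ofReal_pow hc.le, ENNReal.ofReal_pow hr.le] at hle
  exact hle.trans_eq (by ring)

end Density

/-! ### Differentiability almost everywhere -/

section Main

variable {n m : ℕ}

theorem norm_le_frobNorm (A : Eucl n →L[ℝ] Eucl m) : ‖A‖ ≤ frobNorm A := by
  refine A.opNorm_le_bound (Real.sqrt_nonneg _) fun v ↦ ?_
  rw [EuclideanSpace.norm_eq, EuclideanSpace.norm_eq, frobNorm, ← Real.sqrt_mul (by positivity),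
    Finset.sum_mul]
  gcongr with i
  have happly : A v i = ∑ j, A (EuclideanSpace.single j 1) i * v j := by
    conv_lhs => rw [← (EuclideanSpace.basisFun (Fin n) ℝ).sum_repr v]
    simp [mul_comm]
  rw [happly, Real.norm_eq_abs, sq_abs]
  simpa only [Real.norm_eq_abs, sq_abs] using Finset.sum_mul_sq_le_sq_mul_sq Finset.univ
    (fun j ↦ A (EuclideanSpace.single j 1) i) v

theorem continuous_frobNorm :
    Continuous (frobNorm : (Eucl n →L[ℝ] Eucl m) → ℝ) := by
  unfold frobNorm
  fun_prop

theorem MemOrliczSobolevOn.exists_measurable_majorant {φ : ℝ → ℝ} {Ω : Set (Eucl n)}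
    {f : Eucl n → Eucl m} {Df : Eucl n → Eucl n →L[ℝ] Eucl m}
    (hf : MemOrliczSobolevOn φ Ω f Df) :
    ∃ g : Eucl n → ℝ≥0, Measurable g ∧ (∀ᵐ x ∂volume.restrict Ω, ‖Df x‖ₑ ≤ g x) ∧
      ∀ K ⊆ Ω, IsCompact K → ∫⁻ x in K, orliczGauge φ (g x) < ⊤ := by
  obtain ⟨⟨-, hDf, -⟩, hfin⟩ := hf
  have hfrob : AEMeasurable (fun x ↦ (frobNorm (Df x)).toNNReal) (volume.restrict Ω) :=
    (measurable_real_toNNReal.comp continuous_frobNorm.measurable).comp_aemeasurable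
      hDf.aestronglyMeasurable.aemeasurable
  refine ⟨hfrob.mk, hfrob.measurable_mk, ?_, fun K hKΩ hK ↦ (lintegral_mono_ae ?_).trans_lt
    (hfin K hKΩ hK)⟩
  · filter_upwards [hfrob.ae_eq_mk] with x hx
    rw [← hx, ← ofReal_norm]
    exact ENNReal.ofReal_le_ofReal (norm_le_frobNorm (Df x))
  · filter_upwards [ae_restrict_of_ae_restrict_of_subset hKΩ hfrob.ae_eq_mk] with x hx
    rw [← hx, orliczGauge, Real.coe_toNNReal (frobNorm (Df x)) (Real.sqrt_nonneg _)]
    by_cases hpos : frobNorm (Df x) ∈ Ioi 0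
    · rw [indicator_of_mem hpos]
    · simp [indicator_of_notMem hpos]

theorem stmt_0_general (hn : 3 ≤ n) {Ω : Set (Eucl n)} (hΩ : IsOpen Ω) {φ : ℝ → ℝ}
    (hφ : NondecPos φ) (hcal : CalderonCond n φ) {f : Eucl n → Eucl m}
    {Df : Eucl n → Eucl n →L[ℝ] Eucl m} (hf_cont : ContinuousOn f Ω)
    (hf_max : MaximumPrincipleOn f Ω) (hf_sob : MemOrliczSobolevOn φ Ω f Df) :
    ∀ᵐ x ∂volume.restrict Ω, DifferentiableAt ℝ f x := by
  obtain ⟨p, rfl⟩ := Nat.exists_eq_add_of_le' (Nat.le_of_succ_le hn)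
  obtain ⟨S⟩ := CalderonCond.nonempty_calderonSplitting (by lia) hφ hcal
  obtain ⟨g, hg, hDf, hfin⟩ := hf_sob.exists_measurable_majorant
  have hΦ := hφ.monotone_orliczGauge.measurable
  have hc : 0 < √(p + 1 + 1 : ℕ) * 3 := by positivity
  have hdensity := ae_restrict_exists_eventually_setLIntegral_closedBall_mul_le hΩ
    (hΦ.comp hg).aemeasurable hfin hc
  filter_upwards [hdensity, ae_restrict_of_ae (ae_differentiableAt_of_isBigO f),
    ae_restrict_mem hΩ.measurableSet] with x ⟨M, hM, hle⟩ hstepanov hx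
  refine hstepanov (isBigO_sub_of_eventually_edist_le
    (A := 4 * (8 * NNReal.sqrt (p + 1 + 1 : ℕ) * ((∫⁻ s in Ioo 0 1, S.level s) + M) + 2))
    (by finiteness [S.lintegral_level_ne_top]) ?_)
  obtain ⟨δ, hδ, hδΩ⟩ := nhds_basis_closedBall.mem_iff.1 (hΩ.mem_nhds hx)
  filter_upwards [hle, eventually_nhdsGT_zero_mul_left hc (Ioo_mem_nhdsGT hδ),
    self_mem_nhdsWithin] with r hle hr_small hr
  rw [mul_assoc, finrank_euclideanSpace_fin] at hle
  refine hf_max.edist_le_of_setLIntegral_le hf_cont hf_sob.1 S hΦ hg hDf hr ?_ hle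
  exact (closedBall_subset_closedBall (mul_assoc _ _ r ▸ hr_small.2.le)).trans hδΩ

end Main

/-- a continuous open mapping of the Orlicz–Sobolev class `W^{1,φ}_loc(Ω)`,
with `φ` nondecreasing satisfying the Calderón-type condition, is totally differentiable
almost everywhere in `Ω`. -/
theorem stmt_0 (n : ℕ) (hn : 3 ≤ n) (Ω : Set (Eucl n)) (hΩ : IsOpen Ω)
    (φ : ℝ → ℝ) (hφ : NondecPos φ) (hcal : CalderonCond n φ)
    (f : Eucl n → Eucl n) (Df : Eucl n → Eucl n →L[ℝ] Eucl n)
    (hf_cont : ContinuousOn f Ω)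
    (hf_open : ∀ U : Set (Eucl n), U ⊆ Ω → IsOpen U → IsOpen (f '' U))
    (hf_sob : MemOrliczSobolevOn φ Ω f Df) :
    ∀ᵐ x ∂volume.restrict Ω, DifferentiableAt ℝ f x := by
  have : Nontrivial (Eucl n) :=
    Module.nontrivial_of_finrank_pos (R := ℝ) (by rw [finrank_euclideanSpace_fin]; lia)
  exact stmt_0_general hn hΩ hφ hcal hf_cont (maximumPrincipleOn_of_isOpen_image hf_cont hf_open)
    hf_sob
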